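/- Let N ≥ 9. Then the extremal solution u* of the biharmonic MEMS problem (P)_λ on the unit ball is singular, i.e. sup_B u* = 1, and it satisfies the pointwise bounds 1 − C₀|x|^{4/3} ≤ u*(x) ≤ 1 − |x|^{4/3} for all x ∈ B, where C₀ := (λ*/λ̄_N)^{1/3}. -/

import Mathlib

/-!
In the variable `ρ = |x|²` the bilaplacian of a radial function factors into two Euler operators,
which gives Boggio's principle for radial functions on every ball, and with it a comparison
principle for `Δ² - V` as soon as `Δ² - V` has a positive singular supersolution. Take for `V` the
linearization of the nonlinearity at `(1 - |x|^{4/3})²`, which is a subsolution for `N ≥ 9`; a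
supersolution of `Δ² - V` is `|x|⁻² - 19/10 + |x|²`. At the voltage `λ` the rescaled singular
subsolution `1 - a (1 - (1 - |x|^{4/3})²)`, with `a³` proportional to `λ`, has a linearization
dominated by `V`; a radial classical solution at this voltage cannot cross it, hence stays below it,
and its own linearization is dominated by `V` too. Consequently a radial solution is determined by
its voltage.

Shooting from the origin produces radial solutions with `u(0)` as close to `1` as desired, hence the
minimal branch, which is radial, satisfies `u*(0) = 1`. The power `1 - C |x|^{4/3}` is a singular
solution at the voltage `C³ λ̄`. For `C = 1` comparison with it gives the upper bound. If `u*` were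
less than `1 - C |x|^{4/3}` at some point for a `C` with `C³ λ̄ > λ*`, then the whole branch would
stay below this power near the origin. As a function of `ρ`, the difference between
`1 - c |x|^{4/3}`, with `c = λ / (C² λ̄) < C`, and the minimal solution would then be convex, while
its value at the origin tends to `0` along the branch. So it would be at most linear in `|x|²` in
the limit, yet it is at least `(C - c) |x|^{4/3}`.
-/

open MeasureTheory Metric Set Filter

/-- The Laplacian of `u : ℝ^N → ℝ`, as the sum of pure second partial derivatives. -/
noncomputable def lap {N : ℕ} (u : EuclideanSpace ℝ (Fin N) → ℝ) (x : EuclideanSpace ℝ (Fin N)) : ℝ :=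
  ∑ i : Fin N, fderiv ℝ (fun y => fderiv ℝ u y (EuclideanSpace.single i 1)) x
    (EuclideanSpace.single i 1)

/-- The biharmonic operator `Δ²`. -/
noncomputable def biharm {N : ℕ} (u : EuclideanSpace ℝ (Fin N) → ℝ)
    (x : EuclideanSpace ℝ (Fin N)) : ℝ :=
  lap (lap u) x

/-- A classical solution of `(P)_λ` on the unit ball `B ⊆ ℝ^N`:
`u ∈ C⁴(B̄)`, `0 < u < 1` in `B`, `Δ²u = λ (1-u)⁻²` in `B`, and `u = 0`, `∂_ν u = 0` on `∂B`. -/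
structure IsClassicalSolution (N : ℕ) (lam : ℝ) (u : EuclideanSpace ℝ (Fin N) → ℝ) : Prop where
  contDiffOn : ContDiffOn ℝ 4 u (closedBall (0 : EuclideanSpace ℝ (Fin N)) 1)
  pos : ∀ x ∈ ball (0 : EuclideanSpace ℝ (Fin N)) 1, 0 < u x
  lt_one : ∀ x ∈ ball (0 : EuclideanSpace ℝ (Fin N)) 1, u x < 1
  eqn : ∀ x ∈ ball (0 : EuclideanSpace ℝ (Fin N)) 1, biharm u x = lam / (1 - u x) ^ 2
  bdry : ∀ x : EuclideanSpace ℝ (Fin N), ‖x‖ = 1 → u x = 0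
  bdry_deriv : ∀ x : EuclideanSpace ℝ (Fin N), ‖x‖ = 1 →
    fderivWithin ℝ u (closedBall (0 : EuclideanSpace ℝ (Fin N)) 1) x x = 0

/-- The set of voltages `λ > 0` for which `(P)_λ` admits a classical solution;
the pull-in voltage `λ*` is its supremum. -/
def solSet (N : ℕ) : Set ℝ := {lam | 0 < lam ∧ ∃ u, IsClassicalSolution N lam u}

/-- `λ̄_N = (8/9)(N - 2/3)(N - 8/3)`. -/
noncomputable def lamBar (N : ℕ) : ℝ := (8 / 9) * ((N : ℝ) - 2 / 3) * ((N : ℝ) - 8 / 3)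

section

open scoped Topology Laplacian

/-! ### Radial profiles and Boggio's principle -/

/-- The bilaplacian of a radial function in terms of its profile `φ` in the variable `ρ = ‖x‖²`;
`p₂, p₃, p₄` stand for the second, third and fourth derivative of `φ` at `ρ`. -/
def radialBiharm (N : ℕ) (ρ p₂ p₃ p₄ : ℝ) : ℝ :=
  16 * ρ ^ 2 * p₄ + 16 * ((N : ℝ) + 2) * ρ * p₃ + 4 * N * ((N : ℝ) + 2) * p₂

/-- `x ↦ φ (‖x‖²)` is four times differentiable on the punctured unit ball, with radial derivative
governed by `φ'` and bilaplacian `f (‖x‖²)`. The growth conditions at `0` make the singularity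
invisible to the comparison arguments. -/
structure IsRadialProfile (N : ℕ) (φ φ' f : ℝ → ℝ) : Prop where
  continuousOn : ContinuousOn φ (Ioc 0 1)
  continuousOn_deriv : ContinuousOn φ' (Ioc 0 1)
  hasDerivAt : ∀ ρ ∈ Ioo (0 : ℝ) 1, HasDerivAt φ (φ' ρ) ρ
  exists_higher_deriv : ∃ φ₂ φ₃ φ₄ : ℝ → ℝ,
    (∀ ρ ∈ Ioo (0 : ℝ) 1, HasDerivAt φ' (φ₂ ρ) ρ ∧ HasDerivAt φ₂ (φ₃ ρ) ρ ∧
      HasDerivAt φ₃ (φ₄ ρ) ρ ∧ radialBiharm N ρ (φ₂ ρ) (φ₃ ρ) (φ₄ ρ) = f ρ) ∧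
    Tendsto (fun ρ => ρ ^ 4 * φ₂ ρ) (𝓝[>] 0) (𝓝 0) ∧
    Tendsto (fun ρ => ρ ^ 5 * φ₃ ρ) (𝓝[>] 0) (𝓝 0)

namespace IsRadialProfile

variable {N : ℕ} {φ φ' f ψ ψ' g : ℝ → ℝ}

theorem congr (h : IsRadialProfile N φ φ' f) (hψ : EqOn ψ φ (Ioc 0 1))
    (hψ' : EqOn ψ' φ' (Ioc 0 1)) (hg : EqOn g f (Ioo 0 1)) : IsRadialProfile N ψ ψ' g := by
  obtain ⟨φ₂, φ₃, φ₄, hφ, hlim⟩ := h.exists_higher_deriv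
  have eventuallyEq {p q : ℝ → ℝ} (hpq : EqOn p q (Ioc 0 1)) {ρ : ℝ} (hρ : ρ ∈ Ioo (0 : ℝ) 1) :
      p =ᶠ[𝓝 ρ] q :=
    (hpq.mono Ioo_subset_Ioc_self).eventuallyEq_of_mem (isOpen_Ioo.mem_nhds hρ)
  refine ⟨h.continuousOn.congr hψ, h.continuousOn_deriv.congr hψ', fun ρ hρ => ?_,
    φ₂, φ₃, φ₄, fun ρ hρ => ?_, hlim⟩
  · rw [hψ' (Ioo_subset_Ioc_self hρ)]
    exact (h.hasDerivAt ρ hρ).congr_of_eventuallyEq (eventuallyEq hψ hρ)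
  · obtain ⟨h₂, h₃, h₄, hf⟩ := hφ ρ hρ
    exact ⟨h₂.congr_of_eventuallyEq (eventuallyEq hψ' hρ), h₃, h₄, hf.trans (hg hρ).symm⟩

theorem const_mul (h : IsRadialProfile N φ φ' f) (a : ℝ) :
    IsRadialProfile N (fun ρ => a * φ ρ) (fun ρ => a * φ' ρ) (fun ρ => a * f ρ) := by
  obtain ⟨φ₂, φ₃, φ₄, hφ, hlim₂, hlim₃⟩ := h.exists_higher_deriv
  refine ⟨h.continuousOn.const_mul a, h.continuousOn_deriv.const_mul a,
    fun ρ hρ => (h.hasDerivAt ρ hρ).const_mul a,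
    fun ρ => a * φ₂ ρ, fun ρ => a * φ₃ ρ, fun ρ => a * φ₄ ρ, fun ρ hρ => ?_, ?_, ?_⟩
  · obtain ⟨h₂, h₃, h₄, hf⟩ := hφ ρ hρ
    refine ⟨h₂.const_mul a, h₃.const_mul a, h₄.const_mul a, ?_⟩
    rw [← hf, radialBiharm, radialBiharm]
    ring
  · simpa [mul_left_comm] using hlim₂.const_mul a
  · simpa [mul_left_comm] using hlim₃.const_mul a

theorem add (h : IsRadialProfile N φ φ' f) (k : IsRadialProfile N ψ ψ' g) :
    IsRadialProfile N (fun ρ => φ ρ + ψ ρ) (fun ρ => φ' ρ + ψ' ρ) (fun ρ => f ρ + g ρ) := by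
  obtain ⟨φ₂, φ₃, φ₄, hφ, hφlim₂, hφlim₃⟩ := h.exists_higher_deriv
  obtain ⟨ψ₂, ψ₃, ψ₄, hψ, hψlim₂, hψlim₃⟩ := k.exists_higher_deriv
  refine ⟨h.continuousOn.add k.continuousOn, h.continuousOn_deriv.add k.continuousOn_deriv,
    fun ρ hρ => (h.hasDerivAt ρ hρ).add (k.hasDerivAt ρ hρ),
    fun ρ => φ₂ ρ + ψ₂ ρ, fun ρ => φ₃ ρ + ψ₃ ρ, fun ρ => φ₄ ρ + ψ₄ ρ, fun ρ hρ => ?_, ?_, ?_⟩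
  · obtain ⟨h₂, h₃, h₄, hf⟩ := hφ ρ hρ
    obtain ⟨k₂, k₃, k₄, hg⟩ := hψ ρ hρ
    refine ⟨h₂.add k₂, h₃.add k₃, h₄.add k₄, ?_⟩
    rw [← hf, ← hg, radialBiharm, radialBiharm, radialBiharm]
    ring
  · simpa [mul_add] using hφlim₂.add hψlim₂
  · simpa [mul_add] using hφlim₃.add hψlim₃

theorem sub (h : IsRadialProfile N φ φ' f) (k : IsRadialProfile N ψ ψ' g) :
    IsRadialProfile N (fun ρ => φ ρ - ψ ρ) (fun ρ => φ' ρ - ψ' ρ) (fun ρ => f ρ - g ρ) := by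
  simpa [sub_eq_add_neg] using h.add (k.const_mul (-1))

end IsRadialProfile

theorem tendsto_rpow_nhdsGT_zero {a : ℝ} (ha : 0 < a) :
    Tendsto (fun x : ℝ => x ^ a) (𝓝[>] 0) (𝓝 0) := by
  simpa [Real.zero_rpow ha.ne'] using
    (Real.continuousAt_rpow_const 0 a (Or.inr ha.le)).tendsto.mono_left nhdsWithin_le_nhds

theorem isRadialProfile_rpow (N : ℕ) {k : ℝ} (hk : -2 < k) :
    IsRadialProfile N (fun ρ => ρ ^ k) (fun ρ => k * ρ ^ (k - 1)) (fun ρ =>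
      (2 * k * (2 * k - 2 + N)) * (2 * (k - 1) * (2 * k - 4 + N)) * ρ ^ (k - 2)) := by
  have continuousOn_rpow (p : ℝ) : ContinuousOn (fun ρ : ℝ => ρ ^ p) (Ioc 0 1) :=
    continuousOn_id.rpow_const fun ρ hρ => Or.inl hρ.1.ne'
  have hasDerivAt_rpow {p q : ℝ} (hpq : p - 1 = q) {ρ : ℝ} (hρ : 0 < ρ) :
      HasDerivAt (fun x : ℝ => x ^ p) (p * ρ ^ q) ρ :=
    hpq ▸ Real.hasDerivAt_rpow_const (Or.inl hρ.ne')
  have pow_mul_rpow {ρ : ℝ} (hρ : 0 < ρ) {n : ℕ} {p q : ℝ} (h : n + p = q) :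
      ρ ^ n * ρ ^ p = ρ ^ q := by rw [← Real.rpow_natCast, ← Real.rpow_add hρ, h]
  have growth {n : ℕ} {p : ℝ} (h : n + p = k + 2) (c : ℝ) :
      Tendsto (fun ρ : ℝ => ρ ^ n * (c * ρ ^ p)) (𝓝[>] 0) (𝓝 0) := by
    have hlim := (tendsto_rpow_nhdsGT_zero (by linarith : 0 < k + 2)).const_mul c
    rw [mul_zero] at hlim
    refine hlim.congr' ?_
    filter_upwards [self_mem_nhdsWithin] with ρ hρ
    rw [mul_left_comm, pow_mul_rpow hρ h]
  refine ⟨continuousOn_rpow k, (continuousOn_rpow (k - 1)).const_mul k,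
    fun ρ hρ => hasDerivAt_rpow rfl hρ.1, fun ρ => k * (k - 1) * ρ ^ (k - 2),
    fun ρ => k * (k - 1) * (k - 2) * ρ ^ (k - 3),
    fun ρ => k * (k - 1) * (k - 2) * (k - 3) * ρ ^ (k - 4), fun ρ hρ => ⟨?_, ?_, ?_, ?_⟩,
    growth (by push_cast; ring) _, growth (by push_cast; ring) _⟩
  · exact ((hasDerivAt_rpow (q := k - 2) (by ring) hρ.1).const_mul k).congr_deriv (by ring)
  · exact ((hasDerivAt_rpow (q := k - 3) (by ring) hρ.1).const_mul _).congr_deriv (by ring)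
  · exact ((hasDerivAt_rpow (q := k - 4) (by ring) hρ.1).const_mul _).congr_deriv (by ring)
  · have h₃ : ρ * ρ ^ (k - 3) = ρ ^ (k - 2) := by
      simpa using pow_mul_rpow hρ.1 (n := 1) (p := k - 3) (q := k - 2) (by norm_num; ring)
    have h₄ : ρ ^ 2 * ρ ^ (k - 4) = ρ ^ (k - 2) := pow_mul_rpow hρ.1 (by norm_num; ring)
    rw [radialBiharm]
    linear_combination 16 * (k * (k - 1) * (k - 2) * (k - 3)) * h₄ +
      16 * ((N : ℝ) + 2) * (k * (k - 1) * (k - 2)) * h₃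

theorem isRadialProfile_const (N : ℕ) (c : ℝ) :
    IsRadialProfile N (fun _ => c) (fun _ => 0) (fun _ => 0) := by
  simpa using (isRadialProfile_rpow N (k := 0) (by norm_num)).const_mul c

theorem tendsto_rpow_mul_nhdsGT_zero {n : ℕ} {a : ℝ} (hna : n ≤ a) {h : ℝ → ℝ}
    (hh : Tendsto (fun ρ => ρ ^ n * h ρ) (𝓝[>] 0) (𝓝 0)) :
    Tendsto (fun ρ => ρ ^ a * h ρ) (𝓝[>] 0) (𝓝 0) := by
  refine squeeze_zero_norm' ?_ (tendsto_zero_iff_norm_tendsto_zero.1 hh)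
  filter_upwards [Ioo_mem_nhdsGT one_pos] with ρ hρ
  rw [norm_mul, norm_mul, ← Real.rpow_natCast]
  gcongr ?_ * _
  rw [Real.norm_of_nonneg (Real.rpow_nonneg hρ.1.le _),
    Real.norm_of_nonneg (Real.rpow_nonneg hρ.1.le _)]
  exact Real.rpow_le_rpow_of_exponent_ge hρ.1 hρ.2.le hna

theorem nonneg_of_euler_nonneg {a R : ℝ} {h h' : ℝ → ℝ}
    (hh : ∀ ρ ∈ Ioo 0 R, HasDerivAt h (h' ρ) ρ) (hnonneg : ∀ ρ ∈ Ioo 0 R, 0 ≤ ρ * h' ρ + a * h ρ)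
    (hlim : Tendsto (fun ρ => ρ ^ a * h ρ) (𝓝[>] 0) (𝓝 0)) : ∀ ρ ∈ Ioo 0 R, 0 ≤ h ρ := by
  have hderiv : ∀ ρ ∈ Ioo 0 R,
      HasDerivAt (fun x => x ^ a * h x) (ρ ^ (a - 1) * (ρ * h' ρ + a * h ρ)) ρ := fun ρ hρ => by
    refine ((Real.hasDerivAt_rpow_const (p := a) (Or.inl hρ.1.ne')).mul (hh ρ hρ)).congr_deriv ?_
    rw [Real.rpow_sub_one hρ.1.ne']
    field_simp [hρ.1.ne']
    ring
  have hmono : MonotoneOn (fun x => x ^ a * h x) (Ioo 0 R) := by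
    refine monotoneOn_of_hasDerivWithinAt_nonneg (convex_Ioo 0 R)
      (fun x hx => (hderiv x hx).continuousAt.continuousWithinAt)
      (fun x hx => (hderiv x (interior_subset hx)).hasDerivWithinAt) fun x hx => ?_
    rw [interior_Ioo] at hx
    exact mul_nonneg (Real.rpow_nonneg hx.1.le _) (hnonneg x hx)
  intro ρ hρ
  have hle : 0 ≤ ρ ^ a * h ρ := by
    refine le_of_tendsto hlim ?_
    filter_upwards [Ioo_mem_nhdsGT hρ.1] with x hx
    exact hmono ⟨hx.1, hx.2.trans hρ.2⟩ hρ hx.2.le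
  exact nonneg_of_mul_nonneg_right hle (Real.rpow_pos_of_pos hρ.1 _)

namespace IsRadialProfile

variable {N : ℕ} {R : ℝ} {φ φ' f : ℝ → ℝ}

/-- The bilaplacian factors into the two Euler operators `e ↦ ρ e' + (N / 2) e`, applied to
`e = 4 ρ φ''' + (2 N + 4) φ''`, and `h ↦ ρ h' + (N / 2 + 1) h`, applied to `h = φ''`. -/
theorem exists_deriv_deriv_nonneg (h : IsRadialProfile N φ φ' f) (hN : 8 ≤ N) (hR : R ≤ 1)
    (hf : ∀ ρ ∈ Ioo 0 R, 0 ≤ f ρ) :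
    ∃ φ'' : ℝ → ℝ, ∀ ρ ∈ Ioo 0 R, HasDerivAt φ' (φ'' ρ) ρ ∧ 0 ≤ φ'' ρ := by
  obtain ⟨φ₂, φ₃, φ₄, hφ, hlim₂, hlim₃⟩ := h.exists_higher_deriv
  have hN' : (8 : ℝ) ≤ N := by exact_mod_cast hN
  have hsub : Ioo 0 R ⊆ Ioo 0 1 := Ioo_subset_Ioo_right hR
  have he : ∀ ρ ∈ Ioo 0 R, 0 ≤ 4 * (ρ * φ₃ ρ) + (2 * N + 4) * φ₂ ρ := by
    refine nonneg_of_euler_nonneg (a := N / 2)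
      (h' := fun ρ => 4 * (1 * φ₃ ρ + ρ * φ₄ ρ) + (2 * N + 4) * φ₃ ρ) (fun ρ hρ => ?_)
      (fun ρ hρ => ?_) (tendsto_rpow_mul_nhdsGT_zero (n := 4) (by push_cast; linarith) ?_)
    · obtain ⟨-, h₃, h₄, -⟩ := hφ ρ (hsub hρ)
      exact (((hasDerivAt_id ρ).mul h₄).const_mul 4).add (h₃.const_mul _)
    · obtain ⟨-, -, -, hbiharm⟩ := hφ ρ (hsub hρ)
      have hfρ := hf ρ hρ
      rw [← hbiharm, radialBiharm] at hfρ
      linarith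
    · convert (hlim₃.const_mul 4).add (hlim₂.const_mul (2 * N + 4 : ℝ)) using 2 <;> ring
  refine ⟨φ₂, fun ρ hρ => ⟨(hφ ρ (hsub hρ)).1, ?_⟩⟩
  refine nonneg_of_euler_nonneg (a := N / 2 + 1) (fun ρ hρ => (hφ ρ (hsub hρ)).2.1)
    (fun ρ hρ => by linarith [he ρ hρ])
    (tendsto_rpow_mul_nhdsGT_zero (n := 4) (by push_cast; linarith) hlim₂) ρ hρ

theorem convexOn (h : IsRadialProfile N φ φ' f) (hN : 8 ≤ N) (hR : R ≤ 1)
    (hf : ∀ ρ ∈ Ioo 0 R, 0 ≤ f ρ) : ConvexOn ℝ (Ioc 0 R) φ := by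
  obtain ⟨φ'', hφ''⟩ := h.exists_deriv_deriv_nonneg hN hR hf
  refine convexOn_of_hasDerivWithinAt2_nonneg (f' := φ') (f'' := φ'') (convex_Ioc 0 R)
    (h.continuousOn.mono (Ioc_subset_Ioc_right hR)) ?_ ?_ ?_ <;>
    intro ρ hρ <;> rw [interior_Ioc] at hρ
  · exact (h.hasDerivAt ρ ⟨hρ.1, hρ.2.trans_le hR⟩).hasDerivWithinAt
  · exact (hφ'' ρ hρ).1.hasDerivWithinAt
  · exact (hφ'' ρ hρ).2

/-- Boggio's principle. -/
theorem le_of_biharm_nonneg (h : IsRadialProfile N φ φ' f) (hN : 8 ≤ N) (hR : R ≤ 1)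
    (hf : ∀ ρ ∈ Ioo 0 R, 0 ≤ f ρ) (hφ' : φ' R ≤ 0) : ∀ ρ ∈ Ioo 0 R, φ R ≤ φ ρ := by
  obtain ⟨φ'', hφ''⟩ := h.exists_deriv_deriv_nonneg hN hR hf
  have hmono : MonotoneOn φ' (Ioc 0 R) := by
    refine monotoneOn_of_hasDerivWithinAt_nonneg (f' := φ'') (convex_Ioc 0 R)
      (h.continuousOn_deriv.mono (Ioc_subset_Ioc_right hR)) ?_ ?_ <;>
      intro ρ hρ <;> rw [interior_Ioc] at hρ
    exacts [(hφ'' ρ hρ).1.hasDerivWithinAt, (hφ'' ρ hρ).2]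
  have hanti : AntitoneOn φ (Ioc 0 R) := by
    refine antitoneOn_of_hasDerivWithinAt_nonpos (f' := φ') (convex_Ioc 0 R)
      (h.continuousOn.mono (Ioc_subset_Ioc_right hR)) ?_ ?_ <;>
      intro ρ hρ <;> rw [interior_Ioc] at hρ
    · exact (h.hasDerivAt ρ ⟨hρ.1, hρ.2.trans_le hR⟩).hasDerivWithinAt
    · exact (hmono (Ioo_subset_Ioc_self hρ) ⟨hρ.1.trans hρ.2, le_rfl⟩ hρ.2.le).trans hφ'
  exact fun ρ hρ => hanti (Ioo_subset_Ioc_self hρ) ⟨hρ.1.trans hρ.2, le_rfl⟩ hρ.2.le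

end IsRadialProfile

/-! ### Comparison principle for `Δ² - V` -/

theorem exists_isMaxOn_Ioc_of_tendsto {a b l x₀ : ℝ} {q : ℝ → ℝ} (hq : ContinuousOn q (Ioc a b))
    (hlim : Tendsto q (𝓝[>] a) (𝓝 l)) (hx₀ : x₀ ∈ Ioc a b) (hl : l < q x₀) :
    ∃ m ∈ Ioc a b, IsMaxOn q (Ioc a b) m := by
  obtain ⟨u, hau, hu⟩ := mem_nhdsGT_iff_exists_Ioo_subset.1 (hlim.eventually (gt_mem_nhds hl))
  have hmin : a < min u x₀ := lt_min hau hx₀.1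
  have hx₀' : x₀ ∈ Icc (min u x₀) b := ⟨min_le_right _ _, hx₀.2⟩
  obtain ⟨m, hm, hmax⟩ := isCompact_Icc.exists_isMaxOn ⟨x₀, hx₀'⟩
    (hq.mono fun x hx => ⟨hmin.trans_le hx.1, hx.2⟩)
  refine ⟨m, ⟨hmin.trans_le hm.1, hm.2⟩, fun x hx => ?_⟩
  obtain hxm | hxm := le_or_gt (min u x₀) x
  · exact hmax ⟨hxm, hx.2⟩
  · have hlt : q x < q x₀ := hu ⟨hx.1, hxm.trans_le (min_le_left _ _)⟩
    exact hlt.le.trans (isMaxOn_iff.1 hmax x₀ hx₀')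

theorem exists_last_zero {a b : ℝ} (hab : a ≤ b) {φ : ℝ → ℝ} (hφ : ContinuousOn φ (Icc a b))
    (ha : φ a ≤ 0) (hb : 0 < φ b) : ∃ R ∈ Ico a b, φ R = 0 ∧ ∀ x ∈ Ioc R b, 0 < φ x := by
  set S := Icc a b ∩ φ ⁻¹' Iic 0
  have hS : IsCompact S :=
    isCompact_Icc.of_isClosed_subset (hφ.preimage_isClosed_of_isClosed isClosed_Icc isClosed_Iic)
      inter_subset_left
  obtain ⟨R, ⟨hR, hφR⟩, hmax⟩ := hS.exists_isGreatest ⟨a, left_mem_Icc.2 hab, ha⟩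
  have hpos : ∀ x ∈ Ioc R b, 0 < φ x := fun x hx => by
    by_contra! hx'
    exact (hmax ⟨⟨hR.1.trans hx.1.le, hx.2⟩, hx'⟩).not_gt hx.1
  have hRb : R < b := hR.2.lt_of_ne (by rintro rfl; exact hb.not_ge hφR)
  refine ⟨R, ⟨hR.1, hRb⟩, le_antisymm hφR ?_, hpos⟩
  have htendsto : Tendsto φ (𝓝[Ioc R b] R) (𝓝 (φ R)) :=
    (hφ R hR).mono_left (nhdsWithin_mono _ fun x hx => ⟨hR.1.trans hx.1.le, hx.2⟩)
  rw [nhdsWithin_Ioc_eq_nhdsGT hRb] at htendsto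
  refine ge_of_tendsto htendsto ?_
  filter_upwards [Ioc_mem_nhdsGT hRb] with x hx using (hpos x hx).le

theorem deriv_nonneg_of_le_right {φ : ℝ → ℝ} {φ' a b : ℝ} (hφ : HasDerivAt φ φ' a) (hab : a < b)
    (hle : ∀ x ∈ Ioc a b, φ a ≤ φ x) : 0 ≤ φ' := by
  have hslope := hφ.hasDerivWithinAt (s := Ioi a)
  rw [hasDerivWithinAt_iff_tendsto_slope' self_notMem_Ioi] at hslope
  refine ge_of_tendsto hslope ?_
  filter_upwards [Ioc_mem_nhdsGT hab] with x hx
  rw [slope_def_field]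
  exact div_nonneg (sub_nonneg.2 (hle x hx)) (sub_nonneg.2 hx.1.le)

/-- A positive radially decreasing supersolution `χ` of `Δ² - V`, singular at the origin. Touching
a function from above by a multiple of `χ` proves the comparison principle for `Δ² - V`. -/
structure IsComparisonWeight (N : ℕ) (V χ : ℝ → ℝ) : Prop where
  pos : ∀ ρ ∈ Ioc (0 : ℝ) 1, 0 < χ ρ
  tendsto_atTop : Tendsto χ (𝓝[>] 0) atTop
  potential_nonneg : ∀ ρ ∈ Ioo (0 : ℝ) 1, 0 ≤ V ρ
  exists_profile : ∃ χ' g : ℝ → ℝ, IsRadialProfile N χ χ' g ∧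
    (∀ ρ ∈ Ioc (0 : ℝ) 1, χ' ρ ≤ 0) ∧ ∀ ρ ∈ Ioo (0 : ℝ) 1, V ρ * χ ρ ≤ g ρ

namespace IsComparisonWeight

variable {N : ℕ} {V χ φ φ' f : ℝ → ℝ} {R c : ℝ}

theorem nonpos (hχ : IsComparisonWeight N V χ) (hN : 8 ≤ N) (hR0 : 0 < R) (hR1 : R ≤ 1)
    (h : IsRadialProfile N φ φ' f) (hφR : φ R = 0) (hφ'R : 0 ≤ φ' R)
    (hlim : Tendsto φ (𝓝[>] 0) (𝓝 c)) (hf : ∀ ρ ∈ Ioo (0 : ℝ) R, f ρ ≤ V ρ * max (φ ρ) 0) :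
    ∀ ρ ∈ Ioc (0 : ℝ) R, φ ρ ≤ 0 := by
  obtain ⟨χ', g, hprofile, hχ', hg⟩ := hχ.exists_profile
  have hsub : Ioc 0 R ⊆ Ioc 0 1 := Ioc_subset_Ioc_right hR1
  by_contra! hcon
  obtain ⟨ρ₀, hρ₀, hpos⟩ := hcon
  obtain ⟨m, hm, hmax⟩ := exists_isMaxOn_Ioc_of_tendsto (q := fun ρ => φ ρ / χ ρ)
    ((h.continuousOn.div hprofile.continuousOn fun ρ hρ => (hχ.pos ρ hρ).ne').mono hsub)
    (hlim.div_atTop hχ.tendsto_atTop) hρ₀ (div_pos hpos (hχ.pos ρ₀ (hsub hρ₀)))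
  set κ := φ m / χ m
  have hκ : 0 < κ := (div_pos hpos (hχ.pos ρ₀ (hsub hρ₀))).trans_le (hmax hρ₀)
  have hle : ∀ ρ ∈ Ioc 0 R, φ ρ ≤ κ * χ ρ := fun ρ hρ =>
    (div_le_iff₀ (hχ.pos ρ (hsub hρ))).1 (hmax hρ)
  have htouch : κ * χ m = φ m := div_mul_cancel₀ _ (hχ.pos m (hsub hm)).ne'
  have hmR : m < R := hm.2.lt_of_ne (by rintro rfl; simp [κ, hφR] at hκ)
  have hboggio : κ * χ R - φ R ≤ κ * χ m - φ m := by
    refine ((hprofile.const_mul κ).sub h).le_of_biharm_nonneg hN hR1 (fun ρ hρ => ?_) ?_ m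
      ⟨hm.1, hmR⟩
    · have hρ1 : ρ ∈ Ioo 0 1 := ⟨hρ.1, hρ.2.trans_le hR1⟩
      have hmaxle : max (φ ρ) 0 ≤ κ * χ ρ := max_le (hle ρ (Ioo_subset_Ioc_self hρ))
        (mul_pos hκ (hχ.pos ρ (Ioo_subset_Ioc_self hρ1))).le
      rw [sub_nonneg]
      calc f ρ ≤ V ρ * max (φ ρ) 0 := hf ρ hρ
        _ ≤ V ρ * (κ * χ ρ) := mul_le_mul_of_nonneg_left hmaxle (hχ.potential_nonneg ρ hρ1)
        _ = κ * (V ρ * χ ρ) := by ring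
        _ ≤ κ * g ρ := mul_le_mul_of_nonneg_left (hg ρ hρ1) hκ.le
    · linarith [mul_nonpos_of_nonneg_of_nonpos hκ.le (hχ' R ⟨hR0, hR1⟩)]
  linarith [mul_pos hκ (hχ.pos R ⟨hR0, hR1⟩)]

/-- Apply the comparison principle up to the last zero of `φ` before `r₁`. -/
theorem nonpos_of_crossing (hχ : IsComparisonWeight N V χ) (hN : 8 ≤ N)
    (h : IsRadialProfile N φ φ' f) (hlim : Tendsto φ (𝓝[>] 0) (𝓝 c))
    (hf : ∀ ρ ∈ Ioo (0 : ℝ) 1, f ρ ≤ V ρ * max (φ ρ) 0) {r₀ r₁ : ℝ} (hr₀ : 0 < r₀)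
    (hr : r₀ ≤ r₁) (hr₁ : r₁ ≤ 1) (hφr₀ : φ r₀ ≤ 0) (hφr₁ : 0 < φ r₁) :
    ∀ ρ ∈ Ioc (0 : ℝ) r₀, φ ρ ≤ 0 := by
  obtain ⟨R, hR, hφR, hpos⟩ := exists_last_zero hr
    (h.continuousOn.mono fun x hx => ⟨hr₀.trans_le hx.1, hx.2.trans hr₁⟩) hφr₀ hφr₁
  have hR0 : 0 < R := hr₀.trans_le hR.1
  have hR1 : R < 1 := hR.2.trans_le hr₁
  have hφ'R : 0 ≤ φ' R := deriv_nonneg_of_le_right (h.hasDerivAt R ⟨hR0, hR1⟩) hR.2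
    fun x hx => hφR.le.trans (hpos x hx).le
  intro ρ hρ
  exact hχ.nonpos hN hR0 hR1.le h hφR hφ'R hlim (fun x hx => hf x ⟨hx.1, hx.2.trans hR1⟩)
    ρ ⟨hρ.1, hρ.2.trans hR.1⟩

end IsComparisonWeight

/-- The radial profile `φ`, with radial derivative `φ'` and limit `c` at the origin, is a
subsolution of `Δ²u = lam / (1 - u)²`; boundary values are not part of the notion. -/
structure IsRadialSubsolution (N : ℕ) (lam : ℝ) (φ φ' : ℝ → ℝ) (c : ℝ) : Prop where
  exists_profile : ∃ f : ℝ → ℝ, IsRadialProfile N φ φ' f ∧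
    ∀ ρ ∈ Ioo (0 : ℝ) 1, f ρ ≤ lam / (1 - φ ρ) ^ 2
  lt_one : ∀ ρ ∈ Ioo (0 : ℝ) 1, φ ρ < 1
  tendsto : Tendsto φ (𝓝[>] 0) (𝓝 c)

/-- The supersolution counterpart of `IsRadialSubsolution`. -/
structure IsRadialSupersolution (N : ℕ) (lam : ℝ) (φ φ' : ℝ → ℝ) (c : ℝ) : Prop where
  exists_profile : ∃ f : ℝ → ℝ, IsRadialProfile N φ φ' f ∧
    ∀ ρ ∈ Ioo (0 : ℝ) 1, lam / (1 - φ ρ) ^ 2 ≤ f ρ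
  lt_one : ∀ ρ ∈ Ioo (0 : ℝ) 1, φ ρ < 1
  tendsto : Tendsto φ (𝓝[>] 0) (𝓝 c)

/-- The linearization `2 lam / (1 - φ)³` of the nonlinearity at `φ` is dominated by the potential
`V`; this stands in for the stability of `φ`. -/
def IsStableProfile (V : ℝ → ℝ) (lam : ℝ) (φ : ℝ → ℝ) : Prop :=
  ∀ ρ ∈ Ioo (0 : ℝ) 1, 2 * lam / (1 - φ ρ) ^ 3 ≤ V ρ

theorem div_sq_sub_div_sq_le {lam A B V : ℝ} (hlam : 0 ≤ lam) (hA : 0 < A) (hB : 0 < B)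
    (hV : 2 * lam / A ^ 3 ≤ V) : lam / A ^ 2 - lam / B ^ 2 ≤ V * max (B - A) 0 := by
  obtain hAB | hAB := le_total A B
  · have htangent : lam / A ^ 2 - lam / B ^ 2 ≤ 2 * lam / A ^ 3 * (B - A) := by
      have hdiff : 2 * lam / A ^ 3 * (B - A) - (lam / A ^ 2 - lam / B ^ 2) =
          lam * ((B - A) ^ 2 * (2 * B + A)) / (A ^ 3 * B ^ 2) := by
        field_simp
        ring
      have : 0 ≤ lam * ((B - A) ^ 2 * (2 * B + A)) / (A ^ 3 * B ^ 2) := by positivity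
      linarith
    rw [max_eq_left (sub_nonneg.2 hAB)]
    exact htangent.trans (mul_le_mul_of_nonneg_right hV (sub_nonneg.2 hAB))
  · rw [max_eq_right (sub_nonpos.2 hAB), mul_zero, sub_nonpos]
    gcongr

namespace IsRadialSubsolution

variable {N : ℕ} {V χ φ φ' ψ ψ' : ℝ → ℝ} {lam c d r₀ : ℝ}

theorem exists_sub_profile (hφ : IsRadialSubsolution N lam φ φ' c)
    (hstable : IsStableProfile V lam φ)
    (hψ : IsRadialSupersolution N lam ψ ψ' d) (hlam : 0 ≤ lam) :
    ∃ f : ℝ → ℝ, IsRadialProfile N (fun ρ => φ ρ - ψ ρ) (fun ρ => φ' ρ - ψ' ρ) f ∧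
      ∀ ρ ∈ Ioo (0 : ℝ) 1, f ρ ≤ V ρ * max (φ ρ - ψ ρ) 0 := by
  obtain ⟨f, hφf, hf⟩ := hφ.exists_profile
  obtain ⟨g, hψg, hg⟩ := hψ.exists_profile
  refine ⟨_, hφf.sub hψg, fun ρ hρ => ?_⟩
  have hle := div_sq_sub_div_sq_le hlam (sub_pos.2 (hφ.lt_one ρ hρ)) (sub_pos.2 (hψ.lt_one ρ hρ))
    (hstable ρ hρ)
  rw [sub_sub_sub_cancel_left] at hle
  exact (sub_le_sub (hf ρ hρ) (hg ρ hρ)).trans hle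

theorem le_of_boundary (hφ : IsRadialSubsolution N lam φ φ' c) (hstable : IsStableProfile V lam φ)
    (hψ : IsRadialSupersolution N lam ψ ψ' d) (hχ : IsComparisonWeight N V χ) (hN : 8 ≤ N)
    (hlam : 0 ≤ lam) (h1 : φ 1 = ψ 1) (h1' : ψ' 1 ≤ φ' 1) : ∀ ρ ∈ Ioc (0 : ℝ) 1, φ ρ ≤ ψ ρ := by
  obtain ⟨f, hprofile, hf⟩ := hφ.exists_sub_profile hstable hψ hlam
  exact fun ρ hρ => sub_nonpos.1 (hχ.nonpos hN one_pos le_rfl hprofile (sub_eq_zero.2 h1)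
    (sub_nonneg.2 h1') (hφ.tendsto.sub hψ.tendsto) hf ρ hρ)

theorem le_of_crossing (hφ : IsRadialSubsolution N lam φ φ' c) (hstable : IsStableProfile V lam φ)
    (hψ : IsRadialSupersolution N lam ψ ψ' d) (hχ : IsComparisonWeight N V χ) (hN : 8 ≤ N)
    (hlam : 0 ≤ lam) (hr₀ : r₀ ∈ Ioc (0 : ℝ) 1) (hle : φ r₀ ≤ ψ r₀) (h1 : ψ 1 < φ 1) :
    ∀ ρ ∈ Ioc (0 : ℝ) r₀, φ ρ ≤ ψ ρ := by
  obtain ⟨f, hprofile, hf⟩ := hφ.exists_sub_profile hstable hψ hlam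
  exact fun ρ hρ => sub_nonpos.1 (hχ.nonpos_of_crossing hN hprofile
    (hφ.tendsto.sub hψ.tendsto) hf hr₀.1 hr₀.2 le_rfl (sub_nonpos.2 hle) (sub_pos.2 h1) ρ hρ)

theorem limit_le (hφ : IsRadialSubsolution N lam φ φ' c) (hψ : IsRadialSupersolution N lam ψ ψ' d)
    (hr₀ : 0 < r₀) (hle : ∀ ρ ∈ Ioc 0 r₀, φ ρ ≤ ψ ρ) : c ≤ d :=
  le_of_tendsto_of_tendsto hφ.tendsto hψ.tendsto
    (eventually_of_mem (Ioc_mem_nhdsGT hr₀) hle)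

end IsRadialSubsolution

/-! ### Explicit singular profiles -/

/-- `1 - w` for the singular barrier `w = (1 - r ^ (4/3))²`, in the variable `ρ = r²`. -/
noncomputable def barrierGap (ρ : ℝ) : ℝ := 2 * ρ ^ (2 / 3 : ℝ) - ρ ^ (4 / 3 : ℝ)

/-- The derivative of `barrierGap` on `(0, ∞)`. -/
noncomputable def barrierGapDeriv (ρ : ℝ) : ℝ :=
  4 / 3 * ρ ^ (-1 / 3 : ℝ) - 4 / 3 * ρ ^ (1 / 3 : ℝ)

/-- A voltage at which the barrier `1 - barrierGap` is a subsolution. The factor `42 / 5` leaves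
just enough room for both `barrier_biharm_le` and `barrierPotential_mul_comparisonWeight_le`, which
are nearly sharp when `N = 9`. -/
noncomputable def barrierVoltage (N : ℕ) : ℝ := 42 / 5 * lamBar N

/-- The linearization of the nonlinearity at the barrier `1 - barrierGap`. -/
noncomputable def barrierPotential (N : ℕ) (ρ : ℝ) : ℝ := 2 * barrierVoltage N / barrierGap ρ ^ 3

/-- The comparison weight for the operator `Δ² - barrierPotential N`. -/
noncomputable def comparisonWeight (ρ : ℝ) : ℝ := ρ ^ (-1 : ℝ) + (ρ - 19 / 10)

theorem lamBar_pos {N : ℕ} (hN : 3 ≤ N) : 0 < lamBar N := by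
  have hN' : (3 : ℝ) ≤ N := by exact_mod_cast hN
  exact mul_pos (mul_pos (by norm_num) (by linarith)) (by linarith)

theorem barrierVoltage_pos {N : ℕ} (hN : 3 ≤ N) : 0 < barrierVoltage N :=
  mul_pos (by norm_num) (lamBar_pos hN)

theorem exists_eq_cube {ρ : ℝ} (hρ : ρ ∈ Ioc (0 : ℝ) 1) : ∃ s ∈ Ioc (0 : ℝ) 1, ρ = s ^ 3 :=
  ⟨ρ ^ (1 / 3 : ℝ), ⟨Real.rpow_pos_of_pos hρ.1 _, Real.rpow_le_one hρ.1.le hρ.2 (by norm_num)⟩, by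
    rw [← Real.rpow_natCast, ← Real.rpow_mul hρ.1.le]; norm_num⟩

theorem cube_rpow_div_three {s : ℝ} (hs : 0 ≤ s) (k : ℤ) : (s ^ 3) ^ ((k : ℝ) / 3) = s ^ k := by
  rw [← Real.rpow_intCast s k, ← Real.rpow_natCast s 3, ← Real.rpow_mul hs]
  congr 1
  push_cast
  ring

theorem cube_rpow_two_thirds {s : ℝ} (hs : 0 ≤ s) : (s ^ 3) ^ (2 / 3 : ℝ) = s ^ 2 := by
  simpa using cube_rpow_div_three hs 2

theorem barrierGap_cube {s : ℝ} (hs : 0 ≤ s) : barrierGap (s ^ 3) = s ^ 2 * (2 - s ^ 2) := by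
  have h4 : (s ^ 3) ^ (4 / 3 : ℝ) = s ^ 4 := by simpa using cube_rpow_div_three hs 4
  rw [barrierGap, cube_rpow_two_thirds hs, h4]
  ring

theorem two_sub_sq_pos {s : ℝ} (hs : s ∈ Ioc (0 : ℝ) 1) : 0 < 2 - s ^ 2 := by
  have := pow_le_one₀ (n := 2) hs.1.le hs.2
  linarith

theorem barrierGap_pos {ρ : ℝ} (hρ : ρ ∈ Ioc (0 : ℝ) 1) : 0 < barrierGap ρ := by
  obtain ⟨s, hs, rfl⟩ := exists_eq_cube hρ
  rw [barrierGap_cube hs.1.le]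
  exact mul_pos (pow_pos hs.1 2) (two_sub_sq_pos hs)

@[simp] theorem barrierGap_one : barrierGap 1 = 1 := by norm_num [barrierGap]

@[simp] theorem barrierGapDeriv_one : barrierGapDeriv 1 = 0 := by norm_num [barrierGapDeriv]

theorem comparisonWeight_pos {ρ : ℝ} (hρ : 0 < ρ) : 0 < comparisonWeight ρ := by
  rw [comparisonWeight, Real.rpow_neg_one]
  have hdiv : ρ⁻¹ + (ρ - 19 / 10) = ((ρ - 19 / 20) ^ 2 + 39 / 400) / ρ := by
    field_simp
    ring
  rw [hdiv]
  positivity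

theorem weight_polynomial_le {s : ℝ} (h0 : 0 ≤ s) (h1 : s ≤ 1) :
    33 / 5 * (1 - 19 / 10 * s ^ 3 + s ^ 6) ≤ (2 - s ^ 2) ^ 3 := by
  obtain hs | hs := le_total s (7 / 10)
  · have h6 : s ^ 6 ≤ (7 / 10) ^ 2 * s ^ 4 := by
      rw [show s ^ 6 = s ^ 2 * s ^ 4 by ring]
      gcongr
    nlinarith [mul_nonneg h0 (sq_nonneg (s - 113 / 200)), sq_nonneg (s - 113 / 200),
      sq_nonneg (s ^ 2 - (113 / 200) ^ 2)]
  · have hs' : 0 ≤ (s - 7 / 10) * (1 - s) := mul_nonneg (sub_nonneg.2 hs) (sub_nonneg.2 h1)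
    nlinarith [mul_nonneg hs' h0, mul_nonneg hs' (pow_nonneg h0 2),
      mul_nonneg hs' (pow_nonneg h0 3), mul_nonneg hs' (pow_nonneg h0 4)]

theorem barrier_polynomial_le {t : ℝ} (h0 : 0 ≤ t) (h1 : t ≤ 1) :
    (2 + 281 / 100 * t) * (2 - t) ^ 2 ≤ 42 / 5 := by
  nlinarith [mul_nonneg (sub_nonneg.2 h1) (sq_nonneg (t - 1 / 5)), sq_nonneg (t - 19 / 100)]

theorem barrierPotential_mul_comparisonWeight_le {N : ℕ} (hN : 9 ≤ N) {ρ : ℝ}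
    (hρ : ρ ∈ Ioc (0 : ℝ) 1) : barrierPotential N ρ * comparisonWeight ρ ≤
      8 * ((N : ℝ) - 4) * (N - 6) * ρ ^ (-3 : ℝ) := by
  have hN' : (9 : ℝ) ≤ N := by exact_mod_cast hN
  have hvoltage : 2 * barrierVoltage N ≤ 33 / 5 * (8 * ((N : ℝ) - 4) * (N - 6)) := by
    rw [barrierVoltage, lamBar]
    nlinarith
  obtain ⟨s, hs, rfl⟩ := exists_eq_cube hρ
  have hs0 : 0 < s := hs.1
  have hgap : 0 < 2 - s ^ 2 := two_sub_sq_pos hs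
  have hweight : 0 ≤ 1 - 19 / 10 * s ^ 3 + s ^ 6 := by nlinarith [sq_nonneg (s ^ 3 - 19 / 20)]
  have hm3 : (s ^ 3) ^ (-3 : ℝ) = (s ^ 9)⁻¹ := by
    rw [Real.rpow_neg hρ.1.le]
    norm_cast
    ring
  have hfactor : barrierPotential N (s ^ 3) * comparisonWeight (s ^ 3) =
      2 * barrierVoltage N * (1 - 19 / 10 * s ^ 3 + s ^ 6) / (2 - s ^ 2) ^ 3 * (s ^ 9)⁻¹ := by
    rw [barrierPotential, comparisonWeight, barrierGap_cube hs.1.le, Real.rpow_neg_one]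
    field_simp
    ring
  rw [hfactor, hm3]
  gcongr
  rw [div_le_iff₀ (pow_pos hgap 3)]
  calc 2 * barrierVoltage N * (1 - 19 / 10 * s ^ 3 + s ^ 6)
      ≤ 33 / 5 * (8 * ((N : ℝ) - 4) * (N - 6)) * (1 - 19 / 10 * s ^ 3 + s ^ 6) := by gcongr
    _ = 8 * ((N : ℝ) - 4) * (N - 6) * (33 / 5 * (1 - 19 / 10 * s ^ 3 + s ^ 6)) := by ring
    _ ≤ 8 * ((N : ℝ) - 4) * (N - 6) * (2 - s ^ 2) ^ 3 :=
        mul_le_mul_of_nonneg_left (weight_polynomial_le hs.1.le hs.2)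
          (mul_nonneg (by linarith) (by linarith))

theorem barrier_biharm_le {N : ℕ} (hN : 9 ≤ N) {ρ : ℝ} (hρ : ρ ∈ Ioc (0 : ℝ) 1) :
    2 * lamBar N * ρ ^ (-4 / 3 : ℝ) +
        16 / 9 * ((N : ℝ) + 2 / 3) * ((N : ℝ) - 4 / 3) * ρ ^ (-2 / 3 : ℝ) ≤
      barrierVoltage N / barrierGap ρ ^ 2 := by
  have hN' : (9 : ℝ) ≤ N := by exact_mod_cast hN
  have hcoeff : 16 / 9 * ((N : ℝ) + 2 / 3) * ((N : ℝ) - 4 / 3) ≤ 281 / 100 * lamBar N := by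
    rw [lamBar]
    nlinarith
  obtain ⟨s, hs, rfl⟩ := exists_eq_cube hρ
  have hs0 : 0 < s := hs.1
  have hgap : 0 < 2 - s ^ 2 := two_sub_sq_pos hs
  have hlamBar : 0 ≤ lamBar N := (lamBar_pos (by lia)).le
  have hm4 : (s ^ 3) ^ (-4 / 3 : ℝ) = (s ^ 4)⁻¹ := by
    exact_mod_cast (cube_rpow_div_three hs.1.le (-4)).trans (zpow_neg s 4)
  have hm2 : (s ^ 3) ^ (-2 / 3 : ℝ) = (s ^ 2)⁻¹ := by
    exact_mod_cast (cube_rpow_div_three hs.1.le (-2)).trans (zpow_neg s 2)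
  rw [hm4, hm2, barrierGap_cube hs.1.le, barrierVoltage]
  calc 2 * lamBar N * (s ^ 4)⁻¹ +
        16 / 9 * ((N : ℝ) + 2 / 3) * ((N : ℝ) - 4 / 3) * (s ^ 2)⁻¹
      ≤ 2 * lamBar N * (s ^ 4)⁻¹ + 281 / 100 * lamBar N * (s ^ 2)⁻¹ := by gcongr
    _ = lamBar N * ((2 + 281 / 100 * s ^ 2) * (2 - s ^ 2) ^ 2) / (s ^ 2 * (2 - s ^ 2)) ^ 2 := by
        field_simp
    _ ≤ lamBar N * (42 / 5) / (s ^ 2 * (2 - s ^ 2)) ^ 2 := by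
        gcongr
        exact barrier_polynomial_le (by positivity) (pow_le_one₀ hs.1.le hs.2)
    _ = 42 / 5 * lamBar N / (s ^ 2 * (2 - s ^ 2)) ^ 2 := by ring

theorem two_mul_lamBar_div_le_barrierPotential {N : ℕ} (hN : 3 ≤ N) {ρ : ℝ}
    (hρ : ρ ∈ Ioc (0 : ℝ) 1) :
    2 * lamBar N / (ρ ^ (2 / 3 : ℝ)) ^ 3 ≤ barrierPotential N ρ := by
  obtain ⟨s, hs, rfl⟩ := exists_eq_cube hρ
  have hs0 : 0 < s := hs.1
  have hgap : 0 < 2 - s ^ 2 := two_sub_sq_pos hs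
  have hlamBar : 0 < lamBar N := lamBar_pos hN
  rw [cube_rpow_two_thirds hs.1.le, barrierPotential, barrierVoltage, barrierGap_cube hs.1.le,
    mul_pow, ← div_div, div_right_comm]
  gcongr
  rw [le_div_iff₀ (pow_pos hgap 3)]
  have hpow : (2 - s ^ 2) ^ 3 ≤ 2 ^ 3 := by
    gcongr
    linarith [sq_nonneg s]
  nlinarith

theorem isRadialProfile_comparisonWeight (N : ℕ) :
    IsRadialProfile N comparisonWeight (fun ρ => -ρ ^ (-2 : ℝ) + 1)
      (fun ρ => 8 * ((N : ℝ) - 4) * (N - 6) * ρ ^ (-3 : ℝ)) := by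
  refine ((isRadialProfile_rpow N (k := -1) (by norm_num)).add
    ((isRadialProfile_rpow N (k := 1) (by norm_num)).sub (isRadialProfile_const N (19 / 10)))).congr
    (fun ρ _ => ?_) (fun ρ _ => ?_) fun ρ _ => ?_
  · simp [comparisonWeight]
  · norm_num
  · norm_num
    left
    ring

theorem isComparisonWeight_comparisonWeight {N : ℕ} (hN : 9 ≤ N) :
    IsComparisonWeight N (barrierPotential N) comparisonWeight where
  pos ρ hρ := comparisonWeight_pos hρ.1
  tendsto_atTop := by
    refine Tendsto.atTop_add (tendsto_inv_nhdsGT_zero.congr fun ρ => (Real.rpow_neg_one ρ).symm)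
      (C := 0 - 19 / 10) (Tendsto.mono_left ?_ nhdsWithin_le_nhds)
    exact tendsto_id.sub_const _
  potential_nonneg ρ hρ := div_nonneg (mul_pos two_pos (barrierVoltage_pos (by lia))).le
    (pow_pos (barrierGap_pos (Ioo_subset_Ioc_self hρ)) 3).le
  exists_profile := by
    refine ⟨_, _, isRadialProfile_comparisonWeight N, fun ρ hρ => ?_, fun ρ hρ =>
      barrierPotential_mul_comparisonWeight_le hN (Ioo_subset_Ioc_self hρ)⟩
    have := Real.one_le_rpow_of_pos_of_le_one_of_nonpos hρ.1 hρ.2 (z := -2) (by norm_num)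
    linarith

/-- The profile `1 - C r ^ (4/3)` in the variable `ρ = r²`; for `C = 1` it is the singular solution
at `lam = lamBar N`, up to boundary conditions. -/
noncomputable def powerProfile (C ρ : ℝ) : ℝ := 1 - C * ρ ^ (2 / 3 : ℝ)

/-- The derivative of `powerProfile C` on `(0, ∞)`. -/
noncomputable def powerProfileDeriv (C ρ : ℝ) : ℝ := -(C * (2 / 3 * ρ ^ (-1 / 3 : ℝ)))

theorem isRadialProfile_powerProfile (N : ℕ) (C : ℝ) :
    IsRadialProfile N (powerProfile C) (powerProfileDeriv C)
      (fun ρ => C * lamBar N * ρ ^ (-4 / 3 : ℝ)) := by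
  refine ((isRadialProfile_const N 1).sub
    ((isRadialProfile_rpow N (k := 2 / 3) (by norm_num)).const_mul C)).congr
    (fun ρ _ => ?_) (fun ρ _ => ?_) fun ρ _ => ?_
  · rfl
  · norm_num [powerProfileDeriv]
  · norm_num [lamBar]
    ring

theorem tendsto_powerProfile (C : ℝ) : Tendsto (powerProfile C) (𝓝[>] 0) (𝓝 1) := by
  have hrpow := (tendsto_rpow_nhdsGT_zero (a := 2 / 3) (by norm_num)).const_mul C
  rw [mul_zero] at hrpow
  exact sub_zero (1 : ℝ) ▸ hrpow.const_sub 1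

theorem powerProfile_lt_one {C ρ : ℝ} (hC : 0 < C) (hρ : 0 < ρ) : powerProfile C ρ < 1 :=
  sub_lt_self 1 (mul_pos hC (Real.rpow_pos_of_pos hρ _))

theorem powerProfile_biharm (N : ℕ) {C ρ : ℝ} (hC : 0 < C) (hρ : 0 < ρ) :
    C * lamBar N * ρ ^ (-4 / 3 : ℝ) = C ^ 3 * lamBar N / (1 - powerProfile C ρ) ^ 2 := by
  have hrpow : ρ ^ (-4 / 3 : ℝ) = ((ρ ^ (2 / 3 : ℝ)) ^ 2)⁻¹ := by
    rw [← Real.rpow_natCast, ← Real.rpow_mul hρ.le, ← Real.rpow_neg hρ.le]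
    norm_num
  have := Real.rpow_pos_of_pos hρ (2 / 3)
  rw [powerProfile, hrpow]
  field_simp
  ring

theorem isRadialSubsolution_powerProfile {N : ℕ} {lam C : ℝ} (hC : 0 < C)
    (hlam : C ^ 3 * lamBar N ≤ lam) :
    IsRadialSubsolution N lam (powerProfile C) (powerProfileDeriv C) 1 where
  exists_profile := by
    refine ⟨_, isRadialProfile_powerProfile N C, fun ρ hρ => ?_⟩
    rw [powerProfile_biharm N hC hρ.1]
    gcongr
  lt_one ρ hρ := powerProfile_lt_one hC hρ.1
  tendsto := tendsto_powerProfile C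

theorem isRadialSupersolution_powerProfile {N : ℕ} {lam C : ℝ} (hC : 0 < C)
    (hlam : lam ≤ C ^ 3 * lamBar N) :
    IsRadialSupersolution N lam (powerProfile C) (powerProfileDeriv C) 1 where
  exists_profile := by
    refine ⟨_, isRadialProfile_powerProfile N C, fun ρ hρ => ?_⟩
    rw [powerProfile_biharm N hC hρ.1]
    gcongr
  lt_one ρ hρ := powerProfile_lt_one hC hρ.1
  tendsto := tendsto_powerProfile C

theorem isStableProfile_powerProfile {N : ℕ} (hN : 3 ≤ N) {lam C : ℝ} (hC : 0 < C)
    (hlam : lam ≤ C ^ 3 * lamBar N) :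
    IsStableProfile (barrierPotential N) lam (powerProfile C) := fun ρ hρ => by
  have hrpow := Real.rpow_pos_of_pos hρ.1 (2 / 3)
  calc 2 * lam / (1 - powerProfile C ρ) ^ 3
      = 2 * lam / (C ^ 3 * (ρ ^ (2 / 3 : ℝ)) ^ 3) := by rw [powerProfile]; ring
    _ ≤ 2 * (C ^ 3 * lamBar N) / (C ^ 3 * (ρ ^ (2 / 3 : ℝ)) ^ 3) := by gcongr
    _ = 2 * lamBar N / (ρ ^ (2 / 3 : ℝ)) ^ 3 := by field_simp
    _ ≤ barrierPotential N ρ :=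
        two_mul_lamBar_div_le_barrierPotential hN (Ioo_subset_Ioc_self hρ)

theorem isRadialProfile_barrier (N : ℕ) (a : ℝ) :
    IsRadialProfile N (fun ρ => 1 - a * barrierGap ρ) (fun ρ => -(a * barrierGapDeriv ρ))
      (fun ρ => a * (2 * lamBar N * ρ ^ (-4 / 3 : ℝ) +
        16 / 9 * ((N : ℝ) + 2 / 3) * ((N : ℝ) - 4 / 3) * ρ ^ (-2 / 3 : ℝ))) := by
  refine ((isRadialProfile_powerProfile N (2 * a)).add
    ((isRadialProfile_rpow N (k := 4 / 3) (by norm_num)).const_mul a)).congr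
    (fun ρ _ => ?_) (fun ρ _ => ?_) fun ρ _ => ?_
  · simp only [barrierGap, powerProfile]
    ring
  · norm_num [barrierGapDeriv, powerProfileDeriv]
    ring
  · norm_num [lamBar]
    ring

theorem isRadialSubsolution_barrier {N : ℕ} (hN : 9 ≤ N) {lam a : ℝ} (ha : 0 < a)
    (hlam : a ^ 3 * barrierVoltage N ≤ lam) :
    IsRadialSubsolution N lam (fun ρ => 1 - a * barrierGap ρ)
      (fun ρ => -(a * barrierGapDeriv ρ)) 1 where
  exists_profile := by
    refine ⟨_, isRadialProfile_barrier N a, fun ρ hρ => ?_⟩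
    have hgap := barrierGap_pos (Ioo_subset_Ioc_self hρ)
    calc _ ≤ a * (barrierVoltage N / barrierGap ρ ^ 2) :=
          mul_le_mul_of_nonneg_left (barrier_biharm_le hN (Ioo_subset_Ioc_self hρ)) ha.le
      _ = a ^ 3 * barrierVoltage N / (1 - (1 - a * barrierGap ρ)) ^ 2 := by
          rw [sub_sub_cancel]
          field_simp
      _ ≤ _ := by gcongr
  lt_one ρ hρ := sub_lt_self 1 (mul_pos ha (barrierGap_pos (Ioo_subset_Ioc_self hρ)))
  tendsto := by
    have hgap := ((tendsto_rpow_nhdsGT_zero (a := 2 / 3) (by norm_num)).const_mul 2).sub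
      (tendsto_rpow_nhdsGT_zero (a := 4 / 3) (by norm_num))
    simpa [barrierGap] using (hgap.const_mul a).const_sub 1

theorem isStableProfile_barrier {N : ℕ} {lam a : ℝ} (ha : 0 < a)
    (hlam : lam ≤ a ^ 3 * barrierVoltage N) :
    IsStableProfile (barrierPotential N) lam (fun ρ => 1 - a * barrierGap ρ) := fun ρ hρ => by
  have hgap := barrierGap_pos (Ioo_subset_Ioc_self hρ)
  calc 2 * lam / (1 - (1 - a * barrierGap ρ)) ^ 3
      = 2 * lam / (a ^ 3 * barrierGap ρ ^ 3) := by ring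
    _ ≤ 2 * (a ^ 3 * barrierVoltage N) / (a ^ 3 * barrierGap ρ ^ 3) := by gcongr
    _ = barrierPotential N ρ := by
        rw [barrierPotential]
        field_simp

/-! ### Radial solutions -/

/-- A classical solution of `(P)_lam` that is radial, described by its profile `W` in the variable
`ρ = ‖x‖²`, the derivative `W'` of the profile and its value `u₀` at the center. -/
structure IsRadialSolution (N : ℕ) (lam : ℝ) (W W' : ℝ → ℝ) (u₀ : ℝ) : Prop where
  profile : IsRadialProfile N W W' (fun ρ => lam / (1 - W ρ) ^ 2)
  voltage_pos : 0 < lam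
  boundary : W 1 = 0
  boundary_deriv : W' 1 = 0
  pos : ∀ ρ ∈ Ioo (0 : ℝ) 1, 0 < W ρ
  lt_one : ∀ ρ ∈ Ioo (0 : ℝ) 1, W ρ < 1
  tendsto : Tendsto W (𝓝[>] 0) (𝓝 u₀)
  center_lt_one : u₀ < 1

theorem convexOn_le_chord_of_tendsto {a s x l : ℝ} {ψ : ℝ → ℝ} (hψ : ConvexOn ℝ (Ioc a s) ψ)
    (hlim : Tendsto ψ (𝓝[>] a) (𝓝 l)) (hx : x ∈ Ioc a s) :
    ψ x ≤ (s - x) / (s - a) * l + (x - a) / (s - a) * ψ s := by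
  have has : a < s := hx.1.trans_le hx.2
  have hid : Tendsto (fun y : ℝ => y) (𝓝[>] a) (𝓝 a) := tendsto_id.mono_left nhdsWithin_le_nhds
  have hne : s - a ≠ 0 := (sub_pos.2 has).ne'
  refine ge_of_tendsto ((((tendsto_const_nhds (x := s - x)).div (hid.const_sub s) hne).mul hlim).add
    (((hid.const_sub x).div (hid.const_sub s) hne).mul_const (ψ s))) ?_
  filter_upwards [Ioo_mem_nhdsGT hx.1] with y hy
  have hys : 0 < s - y := sub_pos.2 (hy.2.trans_le hx.2)
  have hconvex := hψ.2 ⟨hy.1, (hy.2.trans_le hx.2).le⟩ ⟨has, le_rfl⟩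
    (div_nonneg (sub_nonneg.2 hx.2) hys.le) (div_nonneg (sub_nonneg.2 hy.2.le) hys.le)
    (by field_simp; ring)
  have hcombination : ((s - x) / (s - y)) • y + ((x - y) / (s - y)) • s = x := by
    simp only [smul_eq_mul]
    field_simp
    ring
  rwa [hcombination] at hconvex

namespace IsRadialSolution

variable {N : ℕ} {lam : ℝ} {W W' Z Z' ψ ψ' : ℝ → ℝ} {u₀ v₀ : ℝ}

theorem isRadialSubsolution (h : IsRadialSolution N lam W W' u₀) :
    IsRadialSubsolution N lam W W' u₀ :=
  ⟨⟨_, h.profile, fun _ _ => le_rfl⟩, h.lt_one, h.tendsto⟩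

theorem isRadialSupersolution (h : IsRadialSolution N lam W W' u₀) {μ : ℝ} (hμ : μ ≤ lam) :
    IsRadialSupersolution N μ W W' u₀ :=
  ⟨⟨_, h.profile, fun _ _ => by gcongr⟩, h.lt_one, h.tendsto⟩

theorem lt_barrierVoltage (h : IsRadialSolution N lam W W' u₀) (hN : 9 ≤ N) :
    lam < barrierVoltage N := by
  by_contra! hlam
  have hsub := isRadialSubsolution_barrier hN one_pos (lam := barrierVoltage N) (by simp)
  have hsuper := h.isRadialSupersolution hlam
  have hle := hsub.le_of_boundary (isStableProfile_barrier one_pos (by simp)) hsuper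
    (isComparisonWeight_comparisonWeight hN) (by lia) (barrierVoltage_pos (by lia)).le
    (by simp [h.boundary]) (by simp [h.boundary_deriv])
  exact (hsub.limit_le hsuper one_pos hle).not_gt h.center_lt_one

/-- Otherwise the crossing principle would push the singularity of `ψ` below `W`. -/
theorem lt_of_singular_subsolution (h : IsRadialSolution N lam W W' u₀) (hN : 9 ≤ N) {μ : ℝ}
    (hμ : 0 ≤ μ) (hμlam : μ ≤ lam) (hψ : IsRadialSubsolution N μ ψ ψ' 1)
    (hstable : IsStableProfile (barrierPotential N) μ ψ) (hψ1 : 0 < ψ 1) :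
    ∀ ρ ∈ Ioc (0 : ℝ) 1, W ρ < ψ ρ := by
  by_contra! hcon
  obtain ⟨r₀, hr₀, hle⟩ := hcon
  have hsuper := h.isRadialSupersolution hμlam
  exact (hψ.limit_le hsuper hr₀.1 (hψ.le_of_crossing hstable hsuper
    (isComparisonWeight_comparisonWeight hN) (by lia) hμ hr₀ hle
    (h.boundary.trans_lt hψ1))).not_gt h.center_lt_one

theorem isStableProfile (h : IsRadialSolution N lam W W' u₀) (hN : 9 ≤ N) :
    IsStableProfile (barrierPotential N) lam W := by
  have hvoltage := barrierVoltage_pos (N := N) (by lia)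
  obtain ⟨a, ha, ha3⟩ : ∃ a : ℝ, 0 < a ∧ a ^ 3 = lam / barrierVoltage N := by
    have hdiv : 0 < lam / barrierVoltage N := div_pos h.voltage_pos hvoltage
    refine ⟨(lam / barrierVoltage N) ^ (1 / 3 : ℝ), Real.rpow_pos_of_pos hdiv _, ?_⟩
    rw [← Real.rpow_natCast, ← Real.rpow_mul hdiv.le]
    norm_num
  have halam : a ^ 3 * barrierVoltage N = lam := by rw [ha3, div_mul_cancel₀ _ hvoltage.ne']
  have ha1 : a < 1 := by
    refine lt_of_pow_lt_pow_left₀ 3 zero_le_one ?_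
    rw [ha3, one_pow, div_lt_one hvoltage]
    exact h.lt_barrierVoltage hN
  have hstable := isStableProfile_barrier ha halam.ge
  have hlt := h.lt_of_singular_subsolution hN h.voltage_pos.le le_rfl
    (isRadialSubsolution_barrier hN ha halam.le) hstable (by simpa using ha1)
  intro ρ hρ
  have hgap : 0 < 1 - (1 - a * barrierGap ρ) := by
    rw [sub_sub_cancel]
    exact mul_pos ha (barrierGap_pos (Ioo_subset_Ioc_self hρ))
  have hpos := h.voltage_pos
  have hltρ := hlt ρ (Ioo_subset_Ioc_self hρ)
  calc 2 * lam / (1 - W ρ) ^ 3 ≤ 2 * lam / (1 - (1 - a * barrierGap ρ)) ^ 3 := by gcongr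
    _ ≤ barrierPotential N ρ := hstable ρ hρ

theorem le_of_same_voltage (hW : IsRadialSolution N lam W W' u₀)
    (hZ : IsRadialSolution N lam Z Z' v₀) (hN : 9 ≤ N) : ∀ ρ ∈ Ioc (0 : ℝ) 1, W ρ ≤ Z ρ :=
  hW.isRadialSubsolution.le_of_boundary (hW.isStableProfile hN)
    (hZ.isRadialSupersolution le_rfl) (isComparisonWeight_comparisonWeight hN) (by lia)
    hW.voltage_pos.le (hW.boundary.trans hZ.boundary.symm)
    (hZ.boundary_deriv.trans hW.boundary_deriv.symm).le

theorem center_le_of_same_voltage (hW : IsRadialSolution N lam W W' u₀)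
    (hZ : IsRadialSolution N lam Z Z' v₀) (hN : 9 ≤ N) : u₀ ≤ v₀ :=
  hW.isRadialSubsolution.limit_le (hZ.isRadialSupersolution le_rfl) one_pos
    (hW.le_of_same_voltage hZ hN)

theorem le_powerProfile_one (h : IsRadialSolution N lam W W' u₀) (hN : 9 ≤ N) :
    ∀ ρ ∈ Ioc (0 : ℝ) 1, W ρ ≤ powerProfile 1 ρ := by
  obtain hlam | hlam := le_total lam (lamBar N)
  · exact h.isRadialSubsolution.le_of_boundary (h.isStableProfile hN)
      (isRadialSupersolution_powerProfile one_pos (by simpa using hlam))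
      (isComparisonWeight_comparisonWeight hN) (by lia) h.voltage_pos.le
      (by simp [powerProfile, h.boundary])
      (by norm_num [powerProfileDeriv, h.boundary_deriv])
  · intro ρ hρ
    have hlim : Tendsto (fun C => powerProfile C ρ) (𝓝[<] 1) (𝓝 (powerProfile 1 ρ)) :=
      (continuous_const.sub (continuous_mul_const _)).continuousWithinAt
    refine ge_of_tendsto hlim ?_
    filter_upwards [Ioo_mem_nhdsLT zero_lt_one] with C hC
    have hlamBar := lamBar_pos (N := N) (by lia)
    have hC3 : C ^ 3 * lamBar N ≤ lamBar N :=
      mul_le_of_le_one_left hlamBar.le (pow_le_one₀ hC.1.le hC.2.le)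
    exact (h.lt_of_singular_subsolution hN (mul_pos (pow_pos hC.1 3) hlamBar).le
      (hC3.trans hlam) (isRadialSubsolution_powerProfile hC.1 le_rfl)
      (isStableProfile_powerProfile (by lia) hC.1 le_rfl) (by simpa [powerProfile] using hC.2)
      ρ hρ).le

theorem le_powerProfile_of_le (h : IsRadialSolution N lam W W' u₀) (hN : 9 ≤ N) {C r₀ : ℝ}
    (hC : 1 < C) (hlam : lam ≤ C ^ 3 * lamBar N) (hr₀ : r₀ ∈ Ioc (0 : ℝ) 1)
    (hle : W r₀ ≤ powerProfile C r₀) : ∀ ρ ∈ Ioc (0 : ℝ) r₀, W ρ ≤ powerProfile C ρ :=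
  h.isRadialSubsolution.le_of_crossing (h.isStableProfile hN)
    (isRadialSupersolution_powerProfile (one_pos.trans hC) hlam)
    (isComparisonWeight_comparisonWeight hN) (by lia) h.voltage_pos.le hr₀ hle
    (by simpa [powerProfile, h.boundary] using hC)

theorem convexOn_powerProfile_sub (h : IsRadialSolution N lam W W' u₀) (hN : 8 ≤ N) {C r : ℝ}
    (hC : 0 < C) (hr : r ≤ 1) (hle : ∀ ρ ∈ Ioc 0 r, W ρ ≤ powerProfile C ρ) :
    ConvexOn ℝ (Ioc 0 r) fun ρ => powerProfile (lam / (C ^ 2 * lamBar N)) ρ - W ρ := by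
  have hlamBar := lamBar_pos (N := N) (by lia)
  refine ((isRadialProfile_powerProfile N _).sub h.profile).convexOn hN hr fun ρ hρ => ?_
  have hCρ : 0 < 1 - powerProfile C ρ := sub_pos.2 (powerProfile_lt_one hC hρ.1)
  have hpower := powerProfile_biharm N hC hρ.1
  rw [sub_nonneg]
  calc lam / (1 - W ρ) ^ 2 ≤ lam / (1 - powerProfile C ρ) ^ 2 := by
        have := h.voltage_pos.le
        gcongr
        exact hle ρ (Ioo_subset_Ioc_self hρ)
    _ = lam / (C ^ 2 * lamBar N) / C * (C ^ 3 * lamBar N / (1 - powerProfile C ρ) ^ 2) := by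
        field_simp
    _ = lam / (C ^ 2 * lamBar N) * lamBar N * ρ ^ (-4 / 3 : ℝ) := by
        rw [← hpower]
        field_simp

theorem mul_rpow_le_of_le_powerProfile (h : IsRadialSolution N lam W W' u₀) (hN : 8 ≤ N)
    {C r ρ : ℝ} (hC : 0 < C) (hr : r ≤ 1) (hle : ∀ ρ ∈ Ioc 0 r, W ρ ≤ powerProfile C ρ)
    (hρ : ρ ∈ Ioo 0 r) :
    (C - lam / (C ^ 2 * lamBar N)) * ρ ^ (2 / 3 : ℝ) ≤ 1 - u₀ + ρ / r := by
  have hconvex := h.convexOn_powerProfile_sub hN hC hr hle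
  have hlamBar := lamBar_pos (N := N) (by lia)
  have hc : 0 < lam / (C ^ 2 * lamBar N) := div_pos h.voltage_pos (by positivity)
  set c := lam / (C ^ 2 * lamBar N)
  have hr0 : 0 < r := hρ.1.trans hρ.2
  have hchord := convexOn_le_chord_of_tendsto hconvex ((tendsto_powerProfile c).sub h.tendsto)
    (Ioo_subset_Ioc_self hρ)
  have hend : powerProfile c r - W r ≤ 1 := by
    have hW : 0 ≤ W r := by
      obtain hr1 | rfl := hr.lt_or_eq
      exacts [(h.pos r ⟨hr0, hr1⟩).le, h.boundary.ge]
    linarith [powerProfile_lt_one hc hr0]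
  have : ρ / r ≤ 1 := (div_le_one hr0).2 hρ.2.le
  calc (C - c) * ρ ^ (2 / 3 : ℝ) = powerProfile c ρ - powerProfile C ρ := by
        rw [powerProfile, powerProfile]
        ring
    _ ≤ powerProfile c ρ - W ρ := sub_le_sub_left (hle ρ (Ioo_subset_Ioc_self hρ)) _
    _ ≤ (r - ρ) / (r - 0) * (1 - u₀) + (ρ - 0) / (r - 0) * (powerProfile c r - W r) := hchord
    _ = (1 - ρ / r) * (1 - u₀) + ρ / r * (powerProfile c r - W r) := by
        rw [sub_zero, sub_zero, sub_div, div_self hr0.ne']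
    _ ≤ 1 * (1 - u₀) + ρ / r * 1 := by
        have := h.center_lt_one
        have := hρ.1
        gcongr
        linarith [div_pos this hr0]
    _ = 1 - u₀ + ρ / r := by ring

end IsRadialSolution

theorem pow_three_mul_lamBar_le {N : ℕ} (hN : 8 ≤ N) {l C r : ℝ} (hC : 0 < C)
    (hr : r ∈ Ioc (0 : ℝ) 1)
    (hsolution : ∀ ε > 0, ∃ lam ≤ l, ∃ W W' u₀, IsRadialSolution N lam W W' u₀ ∧ 1 - ε < u₀ ∧
      ∀ ρ ∈ Ioc 0 r, W ρ ≤ powerProfile C ρ) : C ^ 3 * lamBar N ≤ l := by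
  have hlamBar := lamBar_pos (N := N) (by lia)
  set c := l / (C ^ 2 * lamBar N)
  have hbound : ∀ ρ ∈ Ioo 0 r, C - c ≤ ρ ^ (1 / 3 : ℝ) / r := fun ρ hρ => by
    have hρr : (C - c) * ρ ^ (2 / 3 : ℝ) ≤ ρ / r := by
      refine le_of_forall_pos_le_add fun ε hε => ?_
      obtain ⟨lam, hlam, W, W', u₀, hW, hu₀, hle⟩ := hsolution ε hε
      calc (C - c) * ρ ^ (2 / 3 : ℝ) ≤ (C - lam / (C ^ 2 * lamBar N)) * ρ ^ (2 / 3 : ℝ) := by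
            have := hρ.1.le
            simp only [c]
            gcongr
        _ ≤ 1 - u₀ + ρ / r := hW.mul_rpow_le_of_le_powerProfile hN hC hr.2 hle hρ
        _ ≤ ρ / r + ε := by linarith
    have hsplit : ρ / r = ρ ^ (1 / 3 : ℝ) / r * ρ ^ (2 / 3 : ℝ) := by
      rw [div_mul_eq_mul_div, ← Real.rpow_add hρ.1]
      norm_num
    exact le_of_mul_le_mul_right (hρr.trans_eq hsplit) (Real.rpow_pos_of_pos hρ.1 _)
  have hle : C - c ≤ 0 := by
    refine ge_of_tendsto (?_ : Tendsto (fun ρ : ℝ => ρ ^ (1 / 3 : ℝ) / r) (𝓝[>] 0) (𝓝 0))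
      (eventually_of_mem (Ioo_mem_nhdsGT hr.1) hbound)
    simpa using (tendsto_rpow_nhdsGT_zero (a := 1 / 3) (by norm_num)).div_const r
  rw [sub_nonpos, le_div_iff₀ (by positivity)] at hle
  linarith

/-! ### The Laplacian of radial functions -/

section Laplacian

variable {N : ℕ} {lam : ℝ} {u v : EuclideanSpace ℝ (Fin N) → ℝ} {x : EuclideanSpace ℝ (Fin N)}

theorem lap_congr_nhds (h : u =ᶠ[𝓝 x] v) : lap u x = lap v x := by
  unfold lap
  refine Finset.sum_congr rfl fun i _ => ?_
  have hfderiv : (fun y => fderiv ℝ u y (EuclideanSpace.single i 1)) =ᶠ[𝓝 x]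
      fun y => fderiv ℝ v y (EuclideanSpace.single i 1) :=
    h.eventuallyEq_nhds.mono fun y hy => by simp only [hy.fderiv_eq]
  rw [hfderiv.fderiv_eq]

theorem biharm_congr_nhds (h : u =ᶠ[𝓝 x] v) : biharm u x = biharm v x :=
  lap_congr_nhds (h.eventuallyEq_nhds.mono fun _ => lap_congr_nhds)

theorem contDiffAt_lap {n : WithTop ℕ∞} (h : ContDiffAt ℝ (n + 2) u x) :
    ContDiffAt ℝ n (lap u) x := by
  have hn : n + 1 + 1 = n + 2 := by rw [add_assoc, one_add_one_eq_two]
  refine ContDiffAt.sum fun i _ => ContDiffAt.clm_apply (ContDiffAt.fderiv_right (m := n)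
    ?_ le_rfl) contDiffAt_const
  exact (h.fderiv_right hn.le).clm_apply contDiffAt_const

theorem contDiff_lap {n : WithTop ℕ∞} (h : ContDiff ℝ (n + 2) u) : ContDiff ℝ n (lap u) :=
  contDiff_iff_contDiffAt.2 fun _ => contDiffAt_lap h.contDiffAt

theorem lap_eq_laplacian (h : ContDiffAt ℝ 2 u x) : lap u x = Δ u x := by
  rw [InnerProductSpace.laplacian_eq_iteratedFDeriv_orthonormalBasis u
    (EuclideanSpace.basisFun (Fin N) ℝ)]
  refine Finset.sum_congr rfl fun i _ => ?_
  have hfderiv : DifferentiableAt ℝ (fderiv ℝ u) x :=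
    (h.fderiv_right (m := 1) (by norm_num)).differentiableAt one_ne_zero
  rw [iteratedFDeriv_two_apply, fderiv_clm_apply hfderiv (differentiableAt_const _)]
  simp

theorem laplacian_comp_linearIsometryEquiv {E E' F : Type*} [NormedAddCommGroup E]
    [InnerProductSpace ℝ E] [FiniteDimensional ℝ E] [NormedAddCommGroup E']
    [InnerProductSpace ℝ E'] [FiniteDimensional ℝ E'] [NormedAddCommGroup F] [NormedSpace ℝ F]
    (f : E' → F) (A : E ≃ₗᵢ[ℝ] E') (z : E) : Δ (f ∘ A) z = Δ f (A z) := by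
  let b := stdOrthonormalBasis ℝ E
  rw [InnerProductSpace.laplacian_eq_iteratedFDeriv_orthonormalBasis _ b,
    InnerProductSpace.laplacian_eq_iteratedFDeriv_orthonormalBasis _ (b.map A)]
  refine Finset.sum_congr rfl fun i _ => ?_
  have hcomp := A.toContinuousLinearEquiv.iteratedFDerivWithin_comp_right f uniqueDiffOn_univ
    (mem_univ (A.toContinuousLinearEquiv z)) 2
  rw [preimage_univ, iteratedFDerivWithin_univ, iteratedFDerivWithin_univ] at hcomp
  refine (congrArg (fun T => T ![b i, b i]) hcomp).trans ?_
  rw [ContinuousMultilinearMap.compContinuousLinearMap_apply]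
  congr 1
  ext j
  fin_cases j <;> simp

theorem lap_comp_linearIsometryEquiv
    (A : EuclideanSpace ℝ (Fin N) ≃ₗᵢ[ℝ] EuclideanSpace ℝ (Fin N))
    (h : ContDiffAt ℝ 2 u (A x)) : lap (u ∘ A) x = lap u (A x) := by
  rw [lap_eq_laplacian h, lap_eq_laplacian (h.comp x A.contDiff.contDiffAt),
    laplacian_comp_linearIsometryEquiv]

theorem biharm_comp_linearIsometryEquiv
    (A : EuclideanSpace ℝ (Fin N) ≃ₗᵢ[ℝ] EuclideanSpace ℝ (Fin N))
    (h : ContDiffAt ℝ 4 u (A x)) : biharm (u ∘ A) x = biharm u (A x) := by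
  have hlap : lap (u ∘ A) =ᶠ[𝓝 x] lap u ∘ A := by
    filter_upwards [A.continuous.continuousAt.eventually (h.eventually (by simp))] with y hy
    exact lap_comp_linearIsometryEquiv A (hy.of_le (by norm_num))
  have htwo : (4 : WithTop ℕ∞) = 2 + 2 := by norm_num
  rw [biharm, lap_congr_nhds hlap, lap_comp_linearIsometryEquiv A (contDiffAt_lap (htwo ▸ h)),
    biharm]

theorem lap_comp_norm_sq {W W₁ : ℝ → ℝ} {w₂ : ℝ}
    (h₁ : ∀ᶠ ρ in 𝓝 (‖x‖ ^ 2), HasDerivAt W (W₁ ρ) ρ) (h₂ : HasDerivAt W₁ w₂ (‖x‖ ^ 2)) :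
    lap (fun y => W (‖y‖ ^ 2)) x = 4 * ‖x‖ ^ 2 * w₂ + 2 * N * W₁ (‖x‖ ^ 2) := by
  have hnorm (y : EuclideanSpace ℝ (Fin N)) :
      HasFDerivAt (fun z => ‖z‖ ^ 2) (2 • innerSL ℝ y) y :=
    (hasStrictFDerivAt_norm_sq y).hasFDerivAt
  have hsecond (i : Fin N) : fderiv ℝ (fun y : EuclideanSpace ℝ (Fin N) =>
      fderiv ℝ (fun y => W (‖y‖ ^ 2)) y (EuclideanSpace.single i 1)) x (EuclideanSpace.single i 1) =
      4 * w₂ * x i ^ 2 + 2 * W₁ (‖x‖ ^ 2) := by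
    have hfirst : (fun y => fderiv ℝ (fun y : EuclideanSpace ℝ (Fin N) => W (‖y‖ ^ 2)) y
        (EuclideanSpace.single i 1)) =ᶠ[𝓝 x] fun y => W₁ (‖y‖ ^ 2) * (2 * y i) := by
      filter_upwards [(hnorm x).continuousAt.eventually h₁] with y hy
      have hchain : HasFDerivAt (fun y => W (‖y‖ ^ 2)) _ y := hy.comp_hasFDerivAt y (hnorm y)
      rw [hchain.fderiv]
      simp [EuclideanSpace.inner_single_right]
    have hproduct : HasFDerivAt (fun y => W₁ (‖y‖ ^ 2) * (2 * y i)) _ x :=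
      (h₂.comp_hasFDerivAt x (hnorm x)).mul
        ((EuclideanSpace.proj (𝕜 := ℝ) i).hasFDerivAt.const_mul 2)
    rw [hfirst.fderiv_eq, hproduct.fderiv]
    simp [EuclideanSpace.inner_single_right]
    ring
  rw [lap, Finset.sum_congr rfl fun i _ => hsecond i, Finset.sum_add_distrib, ← Finset.mul_sum,
    EuclideanSpace.norm_sq_eq]
  simp only [Real.norm_eq_abs, sq_abs, Finset.sum_const, Finset.card_univ, Fintype.card_fin,
    nsmul_eq_mul]
  ring

theorem biharm_comp_norm_sq {W W₁ W₂ W₃ W₄ : ℝ → ℝ} {I : Set ℝ} (hI : IsOpen I)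
    (hW : ∀ ρ ∈ I, HasDerivAt W (W₁ ρ) ρ ∧ HasDerivAt W₁ (W₂ ρ) ρ ∧ HasDerivAt W₂ (W₃ ρ) ρ ∧
      HasDerivAt W₃ (W₄ ρ) ρ) (hx : ‖x‖ ^ 2 ∈ I) :
    biharm (fun y => W (‖y‖ ^ 2)) x =
      radialBiharm N (‖x‖ ^ 2) (W₂ (‖x‖ ^ 2)) (W₃ (‖x‖ ^ 2)) (W₄ (‖x‖ ^ 2)) := by
  have hlap : lap (fun y : EuclideanSpace ℝ (Fin N) => W (‖y‖ ^ 2)) =ᶠ[𝓝 x]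
      fun y => 4 * ‖y‖ ^ 2 * W₂ (‖y‖ ^ 2) + 2 * N * W₁ (‖y‖ ^ 2) := by
    have hcont : Continuous fun y : EuclideanSpace ℝ (Fin N) => ‖y‖ ^ 2 := by fun_prop
    filter_upwards [hcont.continuousAt.eventually (hI.mem_nhds hx)] with y hy
    exact lap_comp_norm_sq ((hI.eventually_mem hy).mono fun ρ hρ => (hW ρ hρ).1) (hW _ hy).2.1
  have hlap₁ (ρ : ℝ) (hρ : ρ ∈ I) : HasDerivAt (fun ρ => 4 * ρ * W₂ ρ + 2 * N * W₁ ρ)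
      (4 * ρ * W₃ ρ + (4 + 2 * N) * W₂ ρ) ρ := by
    refine ((((hasDerivAt_id' ρ).const_mul 4).mul (hW ρ hρ).2.2.1).add
      ((hW ρ hρ).2.1.const_mul (2 * (N : ℝ)))).congr_deriv ?_
    ring
  have hlap₂ : HasDerivAt (fun ρ => 4 * ρ * W₃ ρ + (4 + 2 * N) * W₂ ρ)
      (4 * ‖x‖ ^ 2 * W₄ (‖x‖ ^ 2) + (8 + 2 * N) * W₃ (‖x‖ ^ 2)) (‖x‖ ^ 2) := by
    refine ((((hasDerivAt_id' _).const_mul 4).mul (hW _ hx).2.2.2).add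
      ((hW _ hx).2.2.1.const_mul (4 + 2 * (N : ℝ)))).congr_deriv ?_
    ring
  rw [biharm, lap_congr_nhds hlap,
    lap_comp_norm_sq (W := fun ρ => 4 * ρ * W₂ ρ + 2 * N * W₁ ρ)
      ((hI.eventually_mem hx).mono hlap₁) hlap₂, radialBiharm]
  ring

end Laplacian

section RadialProfile

/-- `ρ ↦ f(√ρ) / √ρ ^ j`; the derivatives of `ρ ↦ f(√ρ)` are combinations of such quotients. -/
noncomputable def sqrtQuotient (f : ℝ → ℝ) (j : ℕ) (ρ : ℝ) : ℝ :=
  f √ρ / √ρ ^ j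

theorem hasDerivAt_sqrtQuotient {f : ℝ → ℝ} {f' ρ : ℝ} (hρ : 0 < ρ) (hf : HasDerivAt f f' √ρ)
    (j : ℕ) : HasDerivAt (sqrtQuotient f j)
      ((f' / √ρ ^ (j + 1) - j * sqrtQuotient f (j + 2) ρ) / 2) ρ := by
  have hsqrt : 0 < √ρ := Real.sqrt_pos.2 hρ
  refine ((hf.div (hasDerivAt_pow j √ρ) (pow_pos hsqrt j).ne').comp ρ
    (Real.hasDerivAt_sqrt hρ.ne')).congr_deriv ?_
  obtain _ | j := j
  · simp
    ring
  · rw [Nat.add_sub_cancel, sqrtQuotient]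
    field_simp
    push_cast
    ring

theorem continuousOn_sqrtQuotient {f : ℝ → ℝ} (hf : ContinuousOn f (Icc 0 1)) (j : ℕ) :
    ContinuousOn (sqrtQuotient f j) (Ioc 0 1) :=
  (hf.comp Real.continuous_sqrt.continuousOn fun ρ hρ =>
    ⟨Real.sqrt_nonneg ρ, Real.sqrt_le_one.2 hρ.2⟩).div (by fun_prop) fun ρ hρ =>
      (pow_pos (Real.sqrt_pos.2 hρ.1) j).ne'

theorem tendsto_sqrt_nhdsGT_zero : Tendsto Real.sqrt (𝓝[>] 0) (𝓝[Icc 0 1] 0) := by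
  refine tendsto_nhdsWithin_iff.2 ⟨?_, ?_⟩
  · simpa using (Real.continuous_sqrt.tendsto 0).mono_left nhdsWithin_le_nhds
  · filter_upwards [Ioo_mem_nhdsGT zero_lt_one] with ρ hρ
    exact ⟨Real.sqrt_nonneg ρ, Real.sqrt_le_one.2 hρ.2.le⟩

theorem tendsto_pow_mul_sqrtQuotient {f : ℝ → ℝ} (hf : ContinuousWithinAt f (Icc 0 1) 0)
    {j m : ℕ} (hjm : j < 2 * m) :
    Tendsto (fun ρ => ρ ^ m * sqrtQuotient f j ρ) (𝓝[>] 0) (𝓝 0) := by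
  have hlim := ((tendsto_sqrt_nhdsGT_zero.mono_right nhdsWithin_le_nhds).pow (2 * m - j)).mul
    (hf.tendsto.comp tendsto_sqrt_nhdsGT_zero)
  rw [zero_pow (by lia), zero_mul] at hlim
  refine hlim.congr' ?_
  filter_upwards [self_mem_nhdsWithin] with ρ hρ
  have hpow : ρ ^ m = √ρ ^ (2 * m - j) * √ρ ^ j := by
    rw [← pow_add, Nat.sub_add_cancel hjm.le, pow_mul, Real.sq_sqrt (le_of_lt hρ)]
  have : √ρ ≠ 0 := (Real.sqrt_pos.2 hρ).ne'
  rw [hpow, Function.comp_apply, sqrtQuotient]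
  field_simp

section Derivatives

variable {D : ℕ → ℝ → ℝ}

theorem hasDerivAt_comp_sqrt_iterated {ρ : ℝ} (hρ : 0 < ρ)
    (hD : ∀ k < 4, HasDerivAt (D k) (D (k + 1) √ρ) √ρ) :
    let q (k j : ℕ) := sqrtQuotient (D k) j
    HasDerivAt (fun ρ => D 0 √ρ) (q 1 1 ρ / 2) ρ ∧
      HasDerivAt (fun ρ => q 1 1 ρ / 2) ((q 2 2 ρ - q 1 3 ρ) / 4) ρ ∧
      HasDerivAt (fun ρ => (q 2 2 ρ - q 1 3 ρ) / 4)
        ((q 3 3 ρ - 3 * q 2 4 ρ + 3 * q 1 5 ρ) / 8) ρ ∧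
      HasDerivAt (fun ρ => (q 3 3 ρ - 3 * q 2 4 ρ + 3 * q 1 5 ρ) / 8)
        ((q 4 4 ρ - 6 * q 3 5 ρ + 15 * q 2 6 ρ - 15 * q 1 7 ρ) / 16) ρ := by
  intro q
  have h (k : ℕ) (hk : k < 4) (j : ℕ) :
      HasDerivAt (q k j) ((q (k + 1) (j + 1) ρ - j * q k (j + 2) ρ) / 2) ρ :=
    hasDerivAt_sqrtQuotient hρ (hD k hk) j
  have h₁ := h 1 (by norm_num)
  have h₂ := h 2 (by norm_num)
  refine ⟨((h 0 (by norm_num) 0).congr_deriv ?_).congr_of_eventuallyEq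
      (.of_forall fun ρ => by simp [q, sqrtQuotient]),
    ((h₁ 1).div_const 2).congr_deriv ?_, (((h₂ 2).sub (h₁ 3)).div_const 4).congr_deriv ?_,
    ((((h 3 (by norm_num) 3).sub ((h₂ 4).const_mul 3)).add
      ((h₁ 5).const_mul 3)).div_const 8).congr_deriv ?_⟩
  all_goals
    push_cast
    ring

theorem isRadialProfile_comp_sqrt {N : ℕ} (hcont : ∀ k ≤ 3, ContinuousOn (D k) (Icc 0 1))
    (hderiv : ∀ k < 4, ∀ r ∈ Ioo (0 : ℝ) 1, HasDerivAt (D k) (D (k + 1) r) r)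
    {e : EuclideanSpace ℝ (Fin N)} (he : ‖e‖ = 1) :
    IsRadialProfile N (fun ρ => D 0 √ρ) (fun ρ => sqrtQuotient (D 1) 1 ρ / 2)
      (fun ρ => biharm (fun x : EuclideanSpace ℝ (Fin N) => D 0 √(‖x‖ ^ 2)) (√ρ • e)) := by
  have hlim (k : ℕ) (hk : k ≤ 3) {j m : ℕ} (hjm : j < 2 * m) :
      Tendsto (fun ρ => ρ ^ m * sqrtQuotient (D k) j ρ) (𝓝[>] 0) (𝓝 0) :=
    tendsto_pow_mul_sqrtQuotient (hcont k hk 0 (by simp)) hjm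
  have hW (ρ : ℝ) (hρ : ρ ∈ Ioo (0 : ℝ) 1) := hasDerivAt_comp_sqrt_iterated hρ.1 fun k hk =>
    hderiv k hk _ ⟨Real.sqrt_pos.2 hρ.1, (Real.sqrt_lt' one_pos).2 (by simpa using hρ.2)⟩
  have hW₀ : ContinuousOn (fun ρ => D 0 √ρ) (Ioc 0 1) :=
    (continuousOn_sqrtQuotient (hcont 0 (by norm_num)) 0).congr fun ρ _ => by simp [sqrtQuotient]
  refine ⟨hW₀, (continuousOn_sqrtQuotient (hcont 1 (by norm_num)) 1).div_const 2,
    fun ρ hρ => (hW ρ hρ).1, _, _, _, fun ρ hρ => ⟨(hW ρ hρ).2.1, (hW ρ hρ).2.2.1, (hW ρ hρ).2.2.2,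
      ?_⟩, ?_, ?_⟩
  · have hnorm : ‖√ρ • e‖ ^ 2 = ρ := by
      rw [norm_smul, he, mul_one, Real.norm_eq_abs, sq_abs, Real.sq_sqrt hρ.1.le]
    rw [biharm_comp_norm_sq isOpen_Ioo hW (by rwa [hnorm]), hnorm]
  · have hlim₂ := ((hlim 2 (by norm_num) (by norm_num : 2 < 2 * 4)).sub
      (hlim 1 (by norm_num) (by norm_num : 3 < 2 * 4))).div_const 4
    rw [sub_zero, zero_div] at hlim₂
    exact hlim₂.congr fun ρ => by ring
  · have hlim₃ := (((hlim 3 (by norm_num) (by norm_num : 3 < 2 * 5)).sub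
      ((hlim 2 (by norm_num) (by norm_num : 4 < 2 * 5)).const_mul 3)).add
      ((hlim 1 (by norm_num) (by norm_num : 5 < 2 * 5)).const_mul 3)).div_const 8
    rw [mul_zero, sub_zero, add_zero, zero_div] at hlim₃
    exact hlim₃.congr fun ρ => by ring

end Derivatives

theorem isRadialProfile_of_contDiffOn {N : ℕ} {f : ℝ → ℝ} (hf : ContDiffOn ℝ 4 f (Icc 0 1))
    {e : EuclideanSpace ℝ (Fin N)} (he : ‖e‖ = 1) :
    IsRadialProfile N (fun ρ => f √ρ)
      (fun ρ => sqrtQuotient (derivWithin f (Icc 0 1)) 1 ρ / 2)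
      (fun ρ => biharm (fun x : EuclideanSpace ℝ (Fin N) => f √(‖x‖ ^ 2)) (√ρ • e)) := by
  let D (k : ℕ) : ℝ → ℝ := iteratedDerivWithin k f (Icc 0 1)
  have hcont (k : ℕ) (hk : k ≤ 3) : ContinuousOn (D k) (Icc 0 1) :=
    hf.continuousOn_iteratedDerivWithin (by exact_mod_cast hk.trans (Nat.le_succ 3))
      uniqueDiffOn_Icc_zero_one
  have hderiv (k : ℕ) (hk : k < 4) (r : ℝ) (hr : r ∈ Ioo (0 : ℝ) 1) :
      HasDerivAt (D k) (D (k + 1) r) r := by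
    simpa only [D, iteratedDerivWithin_succ] using (hf.differentiableOn_iteratedDerivWithin
      (by exact_mod_cast hk) uniqueDiffOn_Icc_zero_one r
      (Ioo_subset_Icc_self hr)).hasDerivWithinAt.hasDerivAt (Icc_mem_nhds hr.1 hr.2)
  have hD₁ : D 1 = derivWithin f (Icc 0 1) := iteratedDerivWithin_one
  have hD₀ : D 0 = f := iteratedDerivWithin_zero
  simpa only [hD₀, hD₁] using isRadialProfile_comp_sqrt hcont hderiv he

end RadialProfile

theorem uniqueDiffOn_closedBall_zero_one {E : Type*} [NormedAddCommGroup E] [NormedSpace ℝ E] :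
    UniqueDiffOn ℝ (closedBall (0 : E) 1) :=
  uniqueDiffOn_convex (convex_closedBall _ _)
    ⟨0, interior_maximal ball_subset_closedBall isOpen_ball (by simp)⟩

theorem norm_sq_mem_Ioc {E : Type*} [NormedAddCommGroup E] {x : E} (hx : x ∈ ball 0 1)
    (hx₀ : x ≠ 0) : ‖x‖ ^ 2 ∈ Ioc 0 1 :=
  ⟨by positivity, pow_le_one₀ (norm_nonneg x) (mem_ball_zero_iff.1 hx).le⟩

namespace IsClassicalSolution

variable {N : ℕ} {lam : ℝ} {u : EuclideanSpace ℝ (Fin N) → ℝ}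

theorem contDiffAt (h : IsClassicalSolution N lam u) {x : EuclideanSpace ℝ (Fin N)}
    (hx : x ∈ ball 0 1) : ContDiffAt ℝ 4 u x :=
  h.contDiffOn.contDiffAt (mem_of_superset (isOpen_ball.mem_nhds hx) ball_subset_closedBall)

theorem comp_linearIsometryEquiv (h : IsClassicalSolution N lam u)
    (A : EuclideanSpace ℝ (Fin N) ≃ₗᵢ[ℝ] EuclideanSpace ℝ (Fin N)) :
    IsClassicalSolution N lam (u ∘ A) := by
  have hball : MapsTo A (ball 0 1) (ball 0 1) := fun x hx => by simpa using hx
  have hclosedBall : MapsTo A (closedBall 0 1) (closedBall 0 1) := fun x hx => by simpa using hx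
  refine ⟨h.contDiffOn.comp A.contDiff.contDiffOn hclosedBall, fun x hx => h.pos _ (hball hx),
    fun x hx => h.lt_one _ (hball hx), fun x hx => ?_, fun x hx => h.bdry _ (by simpa using hx),
    fun x hx => ?_⟩
  · rw [biharm_comp_linearIsometryEquiv A (h.contDiffAt (hball hx))]
    exact h.eqn _ (hball hx)
  · have hx' : x ∈ closedBall (0 : EuclideanSpace ℝ (Fin N)) 1 := by simp [hx]
    have hu := (h.contDiffOn.differentiableOn (by norm_num) _ (hclosedBall hx')).hasFDerivWithinAt
    rw [(hu.comp x A.toContinuousLinearEquiv.hasFDerivWithinAt hclosedBall).fderivWithin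
      (uniqueDiffOn_closedBall_zero_one x hx')]
    exact h.bdry_deriv (A x) (by simpa using hx)

theorem eq_of_norm_eq_of_minimal (h : IsClassicalSolution N lam u)
    (hmin : ∀ v, IsClassicalSolution N lam v → ∀ x ∈ ball (0 : EuclideanSpace ℝ (Fin N)) 1,
      u x ≤ v x) {x y : EuclideanSpace ℝ (Fin N)} (hx : x ∈ ball 0 1) (hxy : ‖x‖ = ‖y‖) :
    u x = u y := by
  have hle {x y : EuclideanSpace ℝ (Fin N)} (hx : x ∈ ball 0 1) (hxy : ‖x‖ = ‖y‖) :
      u x ≤ u y := by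
    simpa [Submodule.reflection_sub hxy] using
      hmin _ (h.comp_linearIsometryEquiv (Submodule.reflection (ℝ ∙ (x - y))ᗮ)) x hx
  refine (hle hx hxy).antisymm (hle ?_ hxy.symm)
  rwa [mem_ball_zero_iff, ← hxy, ← mem_ball_zero_iff]

theorem derivWithin_smul_one_eq_zero (h : IsClassicalSolution N lam u)
    {e : EuclideanSpace ℝ (Fin N)} (he : ‖e‖ = 1) :
    derivWithin (fun r : ℝ => u (r • e)) (Icc 0 1) 1 = 0 := by
  have hmaps : MapsTo (fun r : ℝ => r • e) (Icc 0 1) (closedBall 0 1) := fun r hr => by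
    simpa [norm_smul, he, abs_of_nonneg hr.1] using hr.2
  have hu := (h.contDiffOn.differentiableOn (by norm_num) _
    (hmaps (right_mem_Icc.2 zero_le_one))).hasFDerivWithinAt
  have hcomp := hu.comp_hasDerivWithinAt 1
    ((hasDerivAt_id (1 : ℝ)).smul_const e).hasDerivWithinAt hmaps
  exact (hcomp.derivWithin (uniqueDiffOn_Icc_zero_one 1 (by simp))).trans
    (h.bdry_deriv _ (by simpa using he))

theorem exists_isRadialSolution (h : IsClassicalSolution N lam u) (hN : 0 < N) (hlam : 0 < lam)
    (hradial : ∀ x ∈ ball (0 : EuclideanSpace ℝ (Fin N)) 1, ∀ y, ‖x‖ = ‖y‖ → u x = u y) :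
    ∃ W W', IsRadialSolution N lam W W' (u 0) ∧
      ∀ x ∈ ball (0 : EuclideanSpace ℝ (Fin N)) 1, u x = W (‖x‖ ^ 2) := by
  let e : EuclideanSpace ℝ (Fin N) := EuclideanSpace.single ⟨0, hN⟩ 1
  have he : ‖e‖ = 1 := by simp [e]
  let U : ℝ → ℝ := fun r => u (r • e)
  have hU : ContDiffOn ℝ 4 U (Icc 0 1) :=
    h.contDiffOn.comp (by fun_prop) fun r hr => by
      simpa [norm_smul, he, abs_of_nonneg hr.1] using hr.2
  have hu : ∀ x ∈ ball (0 : EuclideanSpace ℝ (Fin N)) 1, u x = U √(‖x‖ ^ 2) := fun x hx => by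
    rw [Real.sqrt_sq (norm_nonneg x)]
    exact hradial x hx _ (by simp [norm_smul, he])
  have hmem {ρ : ℝ} (hρ : ρ ∈ Ioo (0 : ℝ) 1) : √ρ • e ∈ ball 0 1 := by
    rw [mem_ball_zero_iff, norm_smul, he, mul_one, Real.norm_of_nonneg (Real.sqrt_nonneg _),
      Real.sqrt_lt' one_pos]
    simpa using hρ.2
  refine ⟨_, _, ⟨(isRadialProfile_of_contDiffOn hU he).congr (fun _ _ => rfl) (fun _ _ => rfl)
    fun ρ hρ => ?_, hlam, by simpa [U] using h.bdry e he, ?_, fun ρ hρ => h.pos _ (hmem hρ),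
    fun ρ hρ => h.lt_one _ (hmem hρ), ?_, h.lt_one 0 (by simp)⟩, hu⟩
  · beta_reduce
    rw [← biharm_congr_nhds ((isOpen_ball.eventually_mem (hmem hρ)).mono hu), h.eqn _ (hmem hρ)]
  · simp [sqrtQuotient, U, h.derivWithin_smul_one_eq_zero he]
  · simpa [U, Function.comp_def] using
      (hU.continuousOn 0 (by simp)).tendsto.comp tendsto_sqrt_nhdsGT_zero

end IsClassicalSolution

/-! ### Finiteness of the pull-in voltage -/

section Integration

theorem integral_mul_fderiv_eq_neg_of_hasCompactSupport {E : Type*} [NormedAddCommGroup E]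
    [NormedSpace ℝ E] [FiniteDimensional ℝ E] [MeasurableSpace E] [BorelSpace E] {μ : Measure E}
    [μ.IsAddHaarMeasure] {f g : E → ℝ} (hf : ContDiff ℝ 1 f) (hg : ContDiff ℝ 1 g)
    (hsupp : HasCompactSupport f) (v : E) :
    ∫ x, f x * fderiv ℝ g x v ∂μ = -∫ x, fderiv ℝ f x v * g x ∂μ :=
  have hf' : Continuous fun x => fderiv ℝ f x v :=
    (hf.continuous_fderiv one_ne_zero).clm_apply continuous_const
  have hg' : Continuous fun x => fderiv ℝ g x v :=
    (hg.continuous_fderiv one_ne_zero).clm_apply continuous_const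
  integral_mul_fderiv_eq_neg_fderiv_mul_of_integrable
    ((hf'.mul hg.continuous).integrable_of_hasCompactSupport (hsupp.fderiv_apply ℝ v).mul_right)
    ((hf.continuous.mul hg').integrable_of_hasCompactSupport hsupp.mul_right)
    ((hf.continuous.mul hg.continuous).integrable_of_hasCompactSupport hsupp.mul_right)
    (fun x _ => hf.differentiable one_ne_zero x) (fun x _ => hg.differentiable one_ne_zero x)

variable {N : ℕ} {f g : EuclideanSpace ℝ (Fin N) → ℝ}

theorem hasCompactSupport_lap (hf : HasCompactSupport f) : HasCompactSupport (lap f) := by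
  refine HasCompactSupport.of_support_subset_isCompact hf fun x hx => ?_
  by_contra hsupp
  rw [notMem_tsupport_iff_eventuallyEq] at hsupp
  exact hx ((lap_congr_nhds hsupp).trans (by simp [lap, Pi.zero_def]))

theorem integral_mul_lap (hf : ContDiff ℝ 2 f) (hg : ContDiff ℝ 2 g)
    (hsupp : HasCompactSupport f) : ∫ x, f x * lap g x = ∫ x, lap f x * g x := by
  have hderiv {h : EuclideanSpace ℝ (Fin N) → ℝ} (hh : ContDiff ℝ 2 h)
      (v : EuclideanSpace ℝ (Fin N)) : ContDiff ℝ 1 fun x => fderiv ℝ h x v :=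
    (hh.fderiv_right (by norm_num)).clm_apply contDiff_const
  have hderiv₂ {h : EuclideanSpace ℝ (Fin N) → ℝ} (hh : ContDiff ℝ 2 h)
      (v : EuclideanSpace ℝ (Fin N)) :
      Continuous fun x => fderiv ℝ (fun y => fderiv ℝ h y v) x v :=
    ((hderiv hh v).continuous_fderiv one_ne_zero).clm_apply continuous_const
  simp only [lap, Finset.mul_sum, Finset.sum_mul]
  rw [integral_finsetSum, integral_finsetSum]
  · refine Finset.sum_congr rfl fun i _ => ?_
    rw [integral_mul_fderiv_eq_neg_of_hasCompactSupport (hf.of_le one_le_two) (hderiv hg _) hsupp,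
      integral_mul_fderiv_eq_neg_of_hasCompactSupport (hderiv hf _) (hg.of_le one_le_two)
        (hsupp.fderiv_apply ℝ _), neg_neg]
  · exact fun i _ => ((hderiv₂ hf _).mul hg.continuous).integrable_of_hasCompactSupport
      ((hsupp.fderiv_apply ℝ _).fderiv_apply ℝ _).mul_right
  · exact fun i _ => (hf.continuous.mul (hderiv₂ hg _)).integrable_of_hasCompactSupport
      hsupp.mul_right

theorem integral_mul_biharm (hf : ContDiff ℝ 4 f) (hg : ContDiff ℝ 4 g)
    (hsupp : HasCompactSupport f) : ∫ x, f x * biharm g x = ∫ x, biharm f x * g x := by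
  have htwo : (4 : WithTop ℕ∞) = 2 + 2 := by norm_num
  exact (integral_mul_lap (hf.of_le (by norm_num)) (contDiff_lap (htwo ▸ hg)) hsupp).trans
    (integral_mul_lap (contDiff_lap (htwo ▸ hf)) (hg.of_le (by norm_num))
      (hasCompactSupport_lap hsupp))

theorem continuous_biharm (hf : ContDiff ℝ 4 f) : Continuous (biharm f) := by
  have hlap : ContDiff ℝ (0 + 2) (lap f) := contDiff_lap (hf.of_le (by norm_num))
  exact (contDiff_lap hlap).continuous

end Integration

theorem exists_contDiff_eqOn_ball {E : Type*} [NormedAddCommGroup E] [NormedSpace ℝ E]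
    [HasContDiffBump E] {n : ℕ∞} {u : E → ℝ} {c : E} {r R M : ℝ} (hr : 0 < r) (hrR : r < R)
    (hu : ContDiffOn ℝ n u (ball c R)) (hbound : ∀ x ∈ ball c R, |u x| ≤ M) :
    ∃ w : E → ℝ, ContDiff ℝ n w ∧ EqOn w u (ball c r) ∧ ∀ x, |w x| ≤ M := by
  obtain ⟨s, hrs, hsR⟩ := exists_between hrR
  let χ : ContDiffBump c := ⟨r, s, hr, hrs⟩
  have hzero (x : E) (hx : x ∉ closedBall c s) : χ x = 0 :=
    χ.zero_of_le_dist (not_le.1 hx).le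
  refine ⟨fun x => χ x * u x, contDiff_iff_contDiffAt.2 fun x => ?_, fun x hx => ?_, fun x => ?_⟩
  · by_cases hx : x ∈ ball c R
    · exact χ.contDiff.contDiffAt.mul (hu.contDiffAt (isOpen_ball.mem_nhds hx))
    · refine contDiffAt_const (c := 0) |>.congr_of_eventuallyEq ?_
      filter_upwards [isClosed_closedBall.isOpen_compl.mem_nhds
        fun h => hx (closedBall_subset_ball hsR h)] with y hy
      rw [hzero y hy, zero_mul]
  · simp [χ.one_of_mem_closedBall (ball_subset_closedBall hx)]
  · have hM : 0 ≤ M := (abs_nonneg _).trans (hbound c (mem_ball_self (hr.trans hrR)))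
    by_cases hx : x ∈ ball c R
    · rw [abs_mul, abs_of_nonneg χ.nonneg]
      exact (mul_le_of_le_one_left (abs_nonneg _) χ.le_one).trans (hbound x hx)
    · simpa [hzero x fun h => hx (closedBall_subset_ball hsR h)] using hM

namespace IsClassicalSolution

variable {N : ℕ} {lam : ℝ} {u ψ : EuclideanSpace ℝ (Fin N) → ℝ}

theorem mul_integral_le (h : IsClassicalSolution N lam u) (hlam : 0 ≤ lam) {r : ℝ} (hr : 0 < r)
    (hr1 : r < 1) (hψ : ContDiff ℝ 4 ψ) (hψ0 : ∀ x, 0 ≤ ψ x) (hsupp : HasCompactSupport ψ)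
    (hψr : ∀ x ∉ ball 0 r, ψ x = 0) : lam * ∫ x, ψ x ≤ ∫ x, |biharm ψ x| := by
  have hbound : ∀ x ∈ ball (0 : EuclideanSpace ℝ (Fin N)) 1, |u x| ≤ 1 := fun x hx =>
    abs_le.2 ⟨by linarith [h.pos x hx], (h.lt_one x hx).le⟩
  obtain ⟨w, hw, hwu, hw1⟩ := exists_contDiff_eqOn_ball (n := 4) hr hr1
    (h.contDiffOn.mono ball_subset_closedBall) hbound
  have hbiharm : HasCompactSupport (biharm ψ) := hasCompactSupport_lap (hasCompactSupport_lap hsupp)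
  calc lam * ∫ x, ψ x = ∫ x, lam * ψ x := (integral_const_mul _ _).symm
    _ ≤ ∫ x, ψ x * biharm w x := by
      refine integral_mono ((hψ.continuous.integrable_of_hasCompactSupport hsupp).const_mul lam)
        ((hψ.continuous.mul (continuous_biharm hw)).integrable_of_hasCompactSupport
          hsupp.mul_right) fun x => ?_
      by_cases hx : x ∈ ball 0 r
      · have hx1 : x ∈ ball 0 1 := ball_subset_ball hr1.le hx
        have hgap : 0 < 1 - u x := sub_pos.2 (h.lt_one x hx1)
        have hgap1 : (1 - u x) ^ 2 ≤ 1 := pow_le_one₀ hgap.le (by linarith [h.pos x hx1])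
        change lam * ψ x ≤ ψ x * biharm w x
        rw [biharm_congr_nhds ((isOpen_ball.eventually_mem hx).mono hwu), h.eqn x hx1, mul_comm]
        exact mul_le_mul_of_nonneg_left (le_div_self hlam (pow_pos hgap 2) hgap1) (hψ0 x)
      · simp [hψr x hx]
    _ = ∫ x, biharm ψ x * w x := integral_mul_biharm hψ hw hsupp
    _ ≤ ∫ x, |biharm ψ x| := by
      refine integral_mono (((continuous_biharm hψ).mul hw.continuous)
        |>.integrable_of_hasCompactSupport hbiharm.mul_right)
        ((continuous_biharm hψ).integrable_of_hasCompactSupport hbiharm).abs fun x => ?_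
      exact (le_abs_self _).trans ((abs_mul _ _).trans_le
        (mul_le_of_le_one_right (abs_nonneg _) (hw1 x)))

end IsClassicalSolution

theorem bddAbove_solSet (N : ℕ) : BddAbove (solSet N) := by
  let ψ : ContDiffBump (0 : EuclideanSpace ℝ (Fin N)) := ⟨1 / 4, 1 / 2, by norm_num, by norm_num⟩
  refine ⟨(∫ x, |biharm ψ x|) / ∫ x, ψ x, ?_⟩
  rintro lam ⟨hlam, u, hu⟩
  rw [le_div_iff₀ ψ.integral_pos]
  exact hu.mul_integral_le hlam.le (r := 1 / 2) (by norm_num) (by norm_num) ψ.contDiff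
    (fun _ => ψ.nonneg) ψ.hasCompactSupport fun x hx => ψ.zero_of_le_dist (not_lt.1 hx)

/-! ### Inverting the radial Laplacian -/

/-- The weighted mean `∫₀¹ τ ^ k H(τ² ρ) dτ` along the segment `[0, ρ]`; for `k = N - 1` and
`ρ = |x|²` it is, up to a constant, the average of `y ↦ H(|y|²)` over the ball of radius `|x|`. -/
noncomputable def rayAverage (k : ℕ) (H : ℝ → ℝ) (ρ : ℝ) : ℝ :=
  ∫ τ in (0 : ℝ)..1, τ ^ k * H (τ ^ 2 * ρ)

/-- The solution of `4 ρ W'' + 2 N W' = H` vanishing at `0`: the inverse of the Laplacian on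
functions of `ρ = |x|²`. It is regular at the origin and is defined for all real `ρ`. -/
noncomputable def radialLapInv (N : ℕ) (H : ℝ → ℝ) (ρ : ℝ) : ℝ :=
  ∫ s in (0 : ℝ)..ρ, 1 / 2 * rayAverage (N - 1) H s

section RadialLapInv

variable {k N : ℕ} {F G H : ℝ → ℝ} {c K : ℝ}

theorem intervalIntegrable_rayAverage (hH : Continuous H) (ρ : ℝ) :
    IntervalIntegrable (fun τ => τ ^ k * H (τ ^ 2 * ρ)) volume 0 1 :=
  (by fun_prop : Continuous fun τ => τ ^ k * H (τ ^ 2 * ρ)).intervalIntegrable _ _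

theorem continuous_rayAverage (hH : Continuous H) : Continuous (rayAverage k H) := by
  refine intervalIntegral.continuous_parametric_intervalIntegral_of_continuous'
    (f := fun ρ τ => τ ^ k * H (τ ^ 2 * ρ)) ?_ 0 1
  fun_prop

theorem rayAverage_sub (hF : Continuous F) (hG : Continuous G) (ρ : ℝ) :
    rayAverage k (F - G) ρ = rayAverage k F ρ - rayAverage k G ρ := by
  simp only [rayAverage, Pi.sub_apply, mul_sub]
  exact intervalIntegral.integral_sub (intervalIntegrable_rayAverage hF ρ)
    (intervalIntegrable_rayAverage hG ρ)

theorem rayAverage_pos (hH : Continuous H) (hpos : ∀ s, 0 < H s) (ρ : ℝ) :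
    0 < rayAverage k H ρ :=
  intervalIntegral.intervalIntegral_pos_of_pos_on (intervalIntegrable_rayAverage hH ρ)
    (fun _ hτ => mul_pos (pow_pos hτ.1 _) (hpos _)) one_pos

theorem abs_rayAverage_le (hb : ∀ s, |H s| ≤ c * Real.cosh (K * s)) (ρ : ℝ) :
    |rayAverage k H ρ| ≤ c * Real.cosh (K * ρ) := by
  have hc : 0 ≤ c := by simpa using (abs_nonneg _).trans (hb 0)
  have hbound (τ : ℝ) (hτ : τ ∈ Ioc (0 : ℝ) 1) :
      ‖τ ^ k * H (τ ^ 2 * ρ)‖ ≤ c * Real.cosh (K * ρ) := by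
    have hcosh : Real.cosh (K * (τ ^ 2 * ρ)) ≤ Real.cosh (K * ρ) := by
      rw [Real.cosh_le_cosh, mul_left_comm, abs_mul, abs_of_nonneg (sq_nonneg τ)]
      exact mul_le_of_le_one_left (abs_nonneg _) (pow_le_one₀ hτ.1.le hτ.2)
    rw [norm_mul, Real.norm_of_nonneg (pow_nonneg hτ.1.le _)]
    exact (mul_le_of_le_one_left (norm_nonneg _) (pow_le_one₀ hτ.1.le hτ.2)).trans
      ((hb _).trans (mul_le_mul_of_nonneg_left hcosh hc))
  simpa [rayAverage] using intervalIntegral.norm_integral_le_of_norm_le (μ := volume) zero_le_one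
    (Eventually.of_forall hbound) (by simp)

theorem hasDerivAt_rayAverage (hH : ContDiff ℝ 1 H) (ρ : ℝ) :
    HasDerivAt (rayAverage k H) (rayAverage (k + 2) (deriv H) ρ) ρ := by
  have hH' : Continuous (deriv H) := hH.continuous_deriv le_rfl
  obtain ⟨C, hC⟩ := (isCompact_Icc (a := -(|ρ| + 1)) (b := |ρ| + 1)).exists_bound_of_continuousOn
    hH'.continuousOn
  have hbound (τ : ℝ) (hτ : τ ∈ uIoc (0 : ℝ) 1) (x : ℝ) (hx : x ∈ ball ρ 1) :
      ‖τ ^ (k + 2) * deriv H (τ ^ 2 * x)‖ ≤ C := by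
    rw [uIoc_of_le zero_le_one] at hτ
    have hxρ : |x| ≤ |ρ| + 1 := by
      rw [mem_ball, Real.dist_eq] at hx
      linarith [abs_sub_abs_le_abs_sub x ρ]
    have hτx : |τ ^ 2 * x| ≤ |ρ| + 1 := by
      rw [abs_mul, abs_of_nonneg (sq_nonneg τ)]
      exact (mul_le_of_le_one_left (abs_nonneg x) (pow_le_one₀ hτ.1.le hτ.2)).trans hxρ
    rw [norm_mul, Real.norm_of_nonneg (pow_nonneg hτ.1.le _)]
    exact (mul_le_of_le_one_left (norm_nonneg _) (pow_le_one₀ hτ.1.le hτ.2)).trans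
      (hC _ (abs_le.1 hτx))
  have hderiv (τ x : ℝ) : HasDerivAt (fun x => τ ^ k * H (τ ^ 2 * x))
      (τ ^ (k + 2) * deriv H (τ ^ 2 * x)) x := by
    have hH₁ := (hH.differentiable one_ne_zero (τ ^ 2 * x)).hasDerivAt
    exact ((hH₁.comp x ((hasDerivAt_id x).const_mul (τ ^ 2))).const_mul (τ ^ k)).congr_deriv
      (by ring)
  have hcont := hH.continuous
  exact (intervalIntegral.hasDerivAt_integral_of_dominated_loc_of_deriv_le
    (bound := fun _ => C) (ball_mem_nhds ρ one_pos)
    (Eventually.of_forall fun x =>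
      (by fun_prop : Continuous fun τ => τ ^ k * H (τ ^ 2 * x)).aestronglyMeasurable)
    (intervalIntegrable_rayAverage hcont ρ)
    (by fun_prop : Continuous fun τ => τ ^ (k + 2) * deriv H (τ ^ 2 * ρ)).aestronglyMeasurable
    (Eventually.of_forall hbound) (by simp)
    (Eventually.of_forall fun τ _ x _ => hderiv τ x)).2

theorem contDiff_rayAverage {n : ℕ} (hH : ContDiff ℝ n H) : ContDiff ℝ n (rayAverage k H) := by
  induction n generalizing k H with
  | zero => exact contDiff_zero.2 (continuous_rayAverage (contDiff_zero.1 hH))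
  | succ n ih =>
    have hderiv := hasDerivAt_rayAverage (k := k)
      (hH.of_le (by exact_mod_cast Nat.le_add_left 1 n))
    push_cast at hH ⊢
    refine contDiff_succ_iff_deriv.2 ⟨fun ρ => (hderiv ρ).differentiableAt, by simp, ?_⟩
    rw [funext fun ρ => (hderiv ρ).deriv]
    exact ih (contDiff_succ_iff_deriv.1 hH).2.2

theorem radialLapInv_zero : radialLapInv N H 0 = 0 :=
  intervalIntegral.integral_same

theorem hasDerivAt_radialLapInv (hH : Continuous H) (ρ : ℝ) :
    HasDerivAt (radialLapInv N H) (1 / 2 * rayAverage (N - 1) H ρ) ρ :=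
  ((continuous_const.mul (continuous_rayAverage hH)).integral_hasStrictDerivAt 0 ρ).hasDerivAt

theorem deriv_radialLapInv (hH : Continuous H) :
    deriv (radialLapInv N H) = fun ρ => 1 / 2 * rayAverage (N - 1) H ρ :=
  funext fun ρ => (hasDerivAt_radialLapInv hH ρ).deriv

theorem contDiff_radialLapInv {n : ℕ} (hH : ContDiff ℝ n H) :
    ContDiff ℝ (n + 1) (radialLapInv N H) := by
  refine contDiff_succ_iff_deriv.2
    ⟨fun ρ => (hasDerivAt_radialLapInv hH.continuous ρ).differentiableAt, by simp, ?_⟩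
  rw [deriv_radialLapInv hH.continuous]
  exact contDiff_const.mul (contDiff_rayAverage hH)

theorem continuous_radialLapInv (hH : Continuous H) : Continuous (radialLapInv N H) :=
  (contDiff_radialLapInv (n := 0) (contDiff_zero.2 hH)).continuous

theorem radialLapInv_sub (hF : Continuous F) (hG : Continuous G) (ρ : ℝ) :
    radialLapInv N (F - G) ρ = radialLapInv N F ρ - radialLapInv N G ρ := by
  have hint {H : ℝ → ℝ} (hH : Continuous H) :
      IntervalIntegrable (fun s => 1 / 2 * rayAverage (N - 1) H s) volume 0 ρ :=
    (continuous_const.mul (continuous_rayAverage hH)).intervalIntegrable _ _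
  simp only [radialLapInv, rayAverage_sub hF hG, mul_sub]
  exact intervalIntegral.integral_sub (hint hF) (hint hG)

theorem integral_cosh_mul (hK : K ≠ 0) (ρ : ℝ) :
    ∫ s in (0 : ℝ)..ρ, Real.cosh (K * s) = Real.sinh (K * ρ) / K := by
  rw [intervalIntegral.integral_comp_mul_left Real.cosh hK,
    intervalIntegral.integral_eq_sub_of_hasDerivAt (fun s _ => Real.hasDerivAt_sinh s)
      (Real.continuous_cosh.intervalIntegrable _ _)]
  simp [div_eq_inv_mul]

theorem abs_radialLapInv_le (hK : 0 < K) (hb : ∀ s, |H s| ≤ c * Real.cosh (K * s)) (ρ : ℝ) :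
    |radialLapInv N H ρ| ≤ c / K * Real.cosh (K * ρ) := by
  have hc : 0 ≤ c := by simpa using (abs_nonneg _).trans (hb 0)
  have hbound (s : ℝ) : ‖1 / 2 * rayAverage (N - 1) H s‖ ≤ c * Real.cosh (K * s) := by
    rw [norm_mul]
    exact (mul_le_of_le_one_left (norm_nonneg _) (by norm_num)).trans (abs_rayAverage_le hb s)
  have hsinh : |Real.sinh (K * ρ)| ≤ Real.cosh (K * ρ) := by
    rw [Real.abs_sinh, ← Real.cosh_abs]
    exact (Real.sinh_lt_cosh _).le
  calc |radialLapInv N H ρ|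
      ≤ |∫ s in (0 : ℝ)..ρ, c * Real.cosh (K * s)| :=
        intervalIntegral.norm_integral_le_abs_of_norm_le (Eventually.of_forall fun s => hbound s)
          ((by fun_prop : Continuous fun s => c * Real.cosh (K * s)).intervalIntegrable _ _)
    _ = c / K * |Real.sinh (K * ρ)| := by
        rw [intervalIntegral.integral_const_mul, integral_cosh_mul hK.ne', abs_mul, abs_div,
          abs_of_pos hK, abs_of_nonneg hc]
        ring
    _ ≤ c / K * Real.cosh (K * ρ) := by gcongr

theorem radialLapInv_equation (hN : 0 < N) (hH : ContDiff ℝ 1 H) (ρ : ℝ) :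
    2 * ρ * rayAverage (N - 1 + 2) (deriv H) ρ + N * rayAverage (N - 1) H ρ = H ρ := by
  have hcont := hH.continuous
  have hcont' : Continuous (deriv H) := hH.continuous_deriv le_rfl
  -- The integrands on the left add up to `d/dτ (τ ^ N * H (τ ^ 2 * ρ))`.
  have hderiv (τ : ℝ) : HasDerivAt (fun τ => τ ^ N * H (τ ^ 2 * ρ))
      (2 * ρ * (τ ^ (N - 1 + 2) * deriv H (τ ^ 2 * ρ)) + N * (τ ^ (N - 1) * H (τ ^ 2 * ρ))) τ := by
    have hH₁ := (hH.differentiable one_ne_zero (τ ^ 2 * ρ)).hasDerivAt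
    refine ((hasDerivAt_pow N τ).mul
      (hH₁.comp τ ((hasDerivAt_pow 2 τ).mul_const ρ))).congr_deriv ?_
    obtain ⟨n, rfl⟩ := Nat.exists_eq_succ_of_ne_zero hN.ne'
    simp only [Function.comp, Nat.succ_sub_one, pow_succ]
    push_cast
    ring
  have hftc := intervalIntegral.integral_eq_sub_of_hasDerivAt (a := 0) (b := 1)
    (fun τ _ => hderiv τ) (Continuous.intervalIntegrable (by fun_prop) _ _)
  rw [intervalIntegral.integral_add ((intervalIntegrable_rayAverage hcont' ρ).const_mul _)
    ((intervalIntegrable_rayAverage hcont ρ).const_mul _), intervalIntegral.integral_const_mul,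
    intervalIntegral.integral_const_mul] at hftc
  simpa [rayAverage, hN.ne'] using hftc

theorem lap_add_mul_radialLapInv (hN : 0 < N) (hH : ContDiff ℝ 1 H) (p q r P : ℝ)
    (x : EuclideanSpace ℝ (Fin N)) :
    lap (fun y => p + q * ‖y‖ ^ 2 + r * radialLapInv N H (P * ‖y‖ ^ 2)) x =
      2 * N * q + r * P * H (P * ‖x‖ ^ 2) := by
  have hmul (ρ : ℝ) : HasDerivAt (fun ρ => P * ρ) P ρ := by
    simpa using (hasDerivAt_id ρ).const_mul P
  have h₁ (ρ : ℝ) : HasDerivAt (fun ρ => p + q * ρ + r * radialLapInv N H (P * ρ))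
      (q + r * (1 / 2 * rayAverage (N - 1) H (P * ρ) * P)) ρ := by
    have hq : HasDerivAt (fun ρ => p + q * ρ) q ρ := by
      simpa using ((hasDerivAt_id ρ).const_mul q).const_add p
    exact hq.add (((hasDerivAt_radialLapInv hH.continuous (P * ρ)).comp ρ (hmul ρ)).const_mul r)
  have h₂ (ρ : ℝ) : HasDerivAt (fun ρ => q + r * (1 / 2 * rayAverage (N - 1) H (P * ρ) * P))
      (r * (1 / 2 * (rayAverage (N - 1 + 2) (deriv H) (P * ρ) * P) * P)) ρ :=
    (((((hasDerivAt_rayAverage hH (P * ρ)).comp ρ (hmul ρ)).const_mul (1 / 2)).mul_const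
      P).const_mul r).const_add q
  rw [lap_comp_norm_sq (Eventually.of_forall h₁) (h₂ _),
    ← radialLapInv_equation hN hH (P * ‖x‖ ^ 2)]
  ring

end RadialLapInv

/-! ### Shooting -/

section TruncatedInvSq

/-- A smooth positive function equal to `v ↦ v⁻²` for `1 ≤ v` and to `1` for `v ≤ 1 / 2`: the
nonlinearity of the MEMS equation with its singularity removed. -/
noncomputable def truncatedInvSq (v : ℝ) : ℝ :=
  Real.smoothTransition (2 * v - 1) / v ^ 2 + (1 - Real.smoothTransition (2 * v - 1))

variable {v : ℝ}

theorem truncatedInvSq_of_one_le (hv : 1 ≤ v) : truncatedInvSq v = 1 / v ^ 2 := by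
  simp [truncatedInvSq, Real.smoothTransition.one_of_one_le (by linarith : 1 ≤ 2 * v - 1)]

theorem truncatedInvSq_of_le_half (hv : v ≤ 1 / 2) : truncatedInvSq v = 1 := by
  simp [truncatedInvSq, Real.smoothTransition.zero_of_nonpos (by linarith : 2 * v - 1 ≤ 0)]

theorem truncatedInvSq_eventuallyEq_one (hv : v < 1 / 2) : truncatedInvSq =ᶠ[𝓝 v] fun _ => 1 := by
  filter_upwards [Iio_mem_nhds hv] with w hw using truncatedInvSq_of_le_half (le_of_lt hw)

theorem truncatedInvSq_mem_Ioc (v : ℝ) : truncatedInvSq v ∈ Ioc 0 4 := by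
  rcases le_or_gt v (1 / 2) with hv | hv
  · norm_num [truncatedInvSq_of_le_half hv]
  · have hpos : 0 < 1 / v ^ 2 := by positivity
    have hle : 1 / v ^ 2 ≤ 4 := by
      rw [div_le_iff₀ (by positivity)]
      nlinarith
    have hs₀ := Real.smoothTransition.nonneg (2 * v - 1)
    have hs₁ := Real.smoothTransition.le_one (2 * v - 1)
    rw [truncatedInvSq, div_eq_mul_one_div]
    refine ⟨?_, by nlinarith⟩
    rcases hs₀.eq_or_lt with hs | hs
    · simp [← hs]
    · linarith [mul_pos hs hpos]

theorem contDiff_truncatedInvSq {n : ℕ∞} : ContDiff ℝ n truncatedInvSq := by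
  refine contDiff_iff_contDiffAt.2 fun v => ?_
  rcases lt_or_ge v (1 / 2) with hv | hv
  · exact contDiffAt_const.congr_of_eventuallyEq (truncatedInvSq_eventuallyEq_one hv)
  · have hv₀ : v ^ 2 ≠ 0 := by positivity
    have hs : ContDiffAt ℝ n (fun v : ℝ => Real.smoothTransition (2 * v - 1)) v :=
      (Real.smoothTransition.contDiff.comp (by fun_prop)).contDiffAt
    exact (hs.div (contDiff_id.pow 2).contDiffAt hv₀).add (contDiffAt_const.sub hs)

theorem abs_deriv_truncatedInvSq_le_two (hv : 1 < v) : |deriv truncatedInvSq v| ≤ 2 := by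
  have heq : truncatedInvSq =ᶠ[𝓝 v] fun w => (w ^ 2)⁻¹ := by
    filter_upwards [Ioi_mem_nhds hv] with w hw
    rw [truncatedInvSq_of_one_le (le_of_lt hw), one_div]
  have hderiv : HasDerivAt (fun w : ℝ => (w ^ 2)⁻¹) _ v :=
    (hasDerivAt_pow 2 v).inv (by positivity)
  rw [heq.deriv_eq, hderiv.deriv, abs_div, abs_of_pos (by positivity : 0 < (v ^ 2) ^ 2),
    div_le_iff₀ (by positivity)]
  norm_num [abs_mul, abs_of_pos (one_pos.trans hv)]
  nlinarith [one_le_pow₀ (n := 3) hv.le]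

theorem exists_lipschitzWith_truncatedInvSq : ∃ L, LipschitzWith L truncatedInvSq := by
  have hC1 : ContDiff ℝ 1 truncatedInvSq := contDiff_truncatedInvSq (n := 1)
  obtain ⟨C, hC⟩ := (isCompact_Icc (a := (1 / 2 : ℝ)) (b := 1)).exists_bound_of_continuousOn
    (hC1.continuous_deriv le_rfl).continuousOn
  refine ⟨(max C 2).toNNReal, lipschitzWith_of_nnnorm_deriv_le
    (hC1.differentiable one_ne_zero) fun v => ?_⟩
  rw [← NNReal.coe_le_coe, coe_nnnorm, Real.coe_toNNReal _ (by positivity)]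
  rcases lt_or_ge v (1 / 2) with hv | hv
  · simp [(truncatedInvSq_eventuallyEq_one hv).deriv_eq]
  rcases le_or_gt v 1 with hv₁ | hv₁
  · exact (hC v ⟨hv, hv₁⟩).trans (le_max_left _ _)
  · exact (abs_deriv_truncatedInvSq_le_two hv₁).trans (le_max_right _ _)

end TruncatedInvSq

section WeightedContraction

variable {X : Type*} [TopologicalSpace X] {ω p q V W : X → ℝ} {κ : NNReal} {c C : ℝ}
  {S : (X → ℝ) → X → ℝ}

/-- `S` acts on continuous functions as a `κ`-Lipschitz map with bounded range, for the norm
`sup |V| / ω`. -/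
structure IsWeightedLipschitz (ω : X → ℝ) (κ : NNReal) (C : ℝ) (S : (X → ℝ) → X → ℝ) : Prop where
  continuous_apply : ∀ V, Continuous V → Continuous (S V)
  abs_le : ∀ V, Continuous V → ∀ x, |S V x| ≤ C * ω x
  abs_sub_le : ∀ V W c, Continuous V → Continuous W → (∀ x, |V x - W x| ≤ c * ω x) →
    ∀ x, |S V x - S W x| ≤ κ * c * ω x

namespace IsWeightedLipschitz

theorem exists_eq_sub (hS : IsWeightedLipschitz ω κ C S) (hκ : κ < 1) (hω : Continuous ω)
    (hωpos : ∀ x, 0 < ω x) (hp : Continuous p) :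
    ∃ V, Continuous V ∧ ∀ x, V x = p x - S V x := by
  have habs (x : X) : |ω x| = ω x := abs_of_pos (hωpos x)
  have hcont (h : BoundedContinuousFunction X ℝ) : Continuous fun x => p x - ω x * h x :=
    hp.sub (hω.mul h.continuous)
  let Φ (h : BoundedContinuousFunction X ℝ) : BoundedContinuousFunction X ℝ :=
    BoundedContinuousFunction.ofNormedAddCommGroup
      (fun x => S (fun x => p x - ω x * h x) x / ω x)
      ((hS.continuous_apply _ (hcont h)).div hω fun x => (hωpos x).ne') C fun x => by
        rw [Real.norm_eq_abs, abs_div, habs, div_le_iff₀ (hωpos x)]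
        exact hS.abs_le _ (hcont h) x
  have hΦ : ContractingWith κ Φ := by
    refine ⟨hκ, LipschitzWith.of_dist_le_mul fun h k => ?_⟩
    refine (BoundedContinuousFunction.dist_le (by positivity)).2 fun x => ?_
    change |S _ x / ω x - S _ x / ω x| ≤ _
    rw [← sub_div, abs_div, habs, div_le_iff₀ (hωpos x)]
    refine hS.abs_sub_le _ _ _ (hcont h) (hcont k) (fun x => ?_) x
    rw [sub_sub_sub_cancel_left, ← mul_sub, abs_mul, habs, mul_comm, abs_sub_comm]
    exact mul_le_mul_of_nonneg_right
      ((Real.dist_eq _ _).symm.trans_le (BoundedContinuousFunction.dist_coe_le_dist x)) (hωpos x).le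
  let h := ContractingWith.fixedPoint Φ hΦ
  refine ⟨fun x => p x - ω x * h x, hcont h, fun x => ?_⟩
  have hfix : S (fun x => p x - ω x * h x) x / ω x = h x :=
    DFunLike.congr_fun hΦ.fixedPoint_isFixedPt x
  rw [div_eq_iff (hωpos x).ne', mul_comm] at hfix
  rw [hfix]

theorem abs_sub_le_of_eq_sub (hS : IsWeightedLipschitz ω κ C S) (hκ : κ < 1)
    (hωpos : ∀ x, 0 < ω x) (hV : Continuous V) (hW : Continuous W)
    (hVp : ∀ x, V x = p x - S V x) (hWq : ∀ x, W x = q x - S W x)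
    (hpq : ∀ x, |p x - q x| ≤ c * ω x) (x : X) :
    |V x - W x| ≤ c / (1 - κ) * ω x := by
  have hstep {d : ℝ} (hd : ∀ x, |S V x - S W x| ≤ d * ω x) (x : X) :
      |V x - W x| / ω x ≤ c + d := by
    rw [div_le_iff₀ (hωpos x), hVp, hWq, sub_sub_sub_comm, add_mul]
    exact (abs_sub _ _).trans (add_le_add (hpq x) (hd x))
  have hbdd : BddAbove (range fun x => |V x - W x| / ω x) := by
    refine ⟨c + (C + C), forall_mem_range.2 (hstep fun x => ?_)⟩
    rw [add_mul]
    exact (abs_sub _ _).trans (add_le_add (hS.abs_le V hV x) (hS.abs_le W hW x))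
  set D := ⨆ x, |V x - W x| / ω x
  have hD (x : X) : |V x - W x| ≤ D * ω x := (div_le_iff₀ (hωpos x)).1 (le_ciSup hbdd x)
  have : Nonempty X := ⟨x⟩
  have hself : D ≤ c + κ * D := ciSup_le (hstep (hS.abs_sub_le V W D hV hW hD))
  have : (κ : ℝ) < 1 := hκ
  refine (hD x).trans (mul_le_mul_of_nonneg_right ?_ (hωpos x).le)
  rw [le_div_iff₀ (by linarith)]
  linarith

end IsWeightedLipschitz

end WeightedContraction

section Shooting

variable {N : ℕ} {g V W : ℝ → ℝ} {a b C K P : ℝ} {L : NNReal}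

/-- `x ↦ V(|x|²)` is the solution of the initial value problem `Δ²v = -g(v)`, `v(0) = 1`,
`Δv(0) = 2 N a` that is regular at the origin, in the form of an integral equation. -/
structure IsShootingSolution (N : ℕ) (g : ℝ → ℝ) (a : ℝ) (V : ℝ → ℝ) : Prop where
  continuous : Continuous V
  eq : ∀ ρ, V ρ = 1 + a * ρ - radialLapInv N (radialLapInv N (g ∘ V)) ρ

theorem abs_comp_le_mul_cosh (hg : ∀ v, |g v| ≤ C) (s : ℝ) :
    |(g ∘ V) s| ≤ C * Real.cosh (K * s) :=
  (hg _).trans (le_mul_of_one_le_right ((abs_nonneg _).trans (hg 0)) (Real.one_le_cosh _))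

theorem abs_comp_sub_le_mul_cosh (hL : LipschitzWith L g)
    (hVW : ∀ s, |V s - W s| ≤ C * Real.cosh (K * s)) (s : ℝ) :
    |(g ∘ V - g ∘ W) s| ≤ L * C * Real.cosh (K * s) := by
  have hdist := hL.dist_le_mul (V s) (W s)
  rw [Real.dist_eq, Real.dist_eq] at hdist
  rw [mul_assoc]
  exact hdist.trans (mul_le_mul_of_nonneg_left (hVW s) L.2)

theorem abs_le_cosh_mul (hK : 1 ≤ K) (s : ℝ) : |s| ≤ Real.cosh (K * s) :=
  calc |s| ≤ |K * s| := by
        rw [abs_mul, abs_of_nonneg (by linarith : 0 ≤ K)]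
        exact le_mul_of_one_le_left (abs_nonneg s) hK
    _ ≤ Real.sinh |K * s| := Real.self_le_sinh_iff.2 (abs_nonneg _)
    _ ≤ Real.cosh (K * s) := by
        rw [← Real.cosh_abs]
        exact (Real.sinh_lt_cosh _).le

theorem isWeightedLipschitz_radialLapInv_radialLapInv_comp (hL : LipschitzWith L g)
    (hg : ∀ v, |g v| ≤ C) (hK : 0 < K) (hLK : 2 * L ≤ K ^ 2) :
    IsWeightedLipschitz (fun ρ => Real.cosh (K * ρ)) (1 / 2) (C / K / K)
      fun V => radialLapInv N (radialLapInv N (g ∘ V)) where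
  continuous_apply _ hV :=
    continuous_radialLapInv (continuous_radialLapInv (hL.continuous.comp hV))
  abs_le _ _ := abs_radialLapInv_le hK (abs_radialLapInv_le hK (abs_comp_le_mul_cosh hg))
  abs_sub_le V W c hV hW hVW ρ := by
    have hgV := hL.continuous.comp hV
    have hgW := hL.continuous.comp hW
    have hc : 0 ≤ c := by simpa using (abs_nonneg _).trans (hVW 0)
    have hfactor : L * c / K / K ≤ (1 / 2 : NNReal) * c := by
      rw [div_div, div_le_iff₀ (by positivity)]
      push_cast
      nlinarith
    rw [← radialLapInv_sub (continuous_radialLapInv hgV) (continuous_radialLapInv hgW)]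
    refine (abs_radialLapInv_le hK (fun s => ?_) ρ).trans
      (mul_le_mul_of_nonneg_right hfactor (Real.cosh_pos _).le)
    rw [Pi.sub_apply, ← radialLapInv_sub hgV hgW]
    exact abs_radialLapInv_le hK (abs_comp_sub_le_mul_cosh hL hVW) s

theorem exists_isShootingSolution (hL : LipschitzWith L g) (hg : ∀ v, |g v| ≤ C) (a : ℝ) :
    ∃ V, IsShootingSolution N g a V := by
  have : (0 : ℝ) ≤ L := L.2
  have hS := isWeightedLipschitz_radialLapInv_radialLapInv_comp (N := N) (K := L + 2) hL hg
    (by positivity) (by nlinarith)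
  obtain ⟨V, hV, heq⟩ := hS.exists_eq_sub one_half_lt_one (by fun_prop)
    (fun ρ => Real.cosh_pos _) (by fun_prop : Continuous fun ρ => 1 + a * ρ)
  exact ⟨V, hV, heq⟩

namespace IsShootingSolution

theorem abs_sub_le (hV : IsShootingSolution N g a V) (hW : IsShootingSolution N g b W)
    (hL : LipschitzWith L g) (hg : ∀ v, |g v| ≤ C) (ρ : ℝ) :
    |V ρ - W ρ| ≤ 2 * |a - b| * Real.cosh ((L + 2) * ρ) := by
  have : (0 : ℝ) ≤ L := L.2
  have hS := isWeightedLipschitz_radialLapInv_radialLapInv_comp (N := N) (K := L + 2) hL hg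
    (by positivity) (by nlinarith)
  have hlin (s : ℝ) : |1 + a * s - (1 + b * s)| ≤ |a - b| * Real.cosh ((L + 2) * s) := by
    rw [add_sub_add_left_eq_sub, ← sub_mul, abs_mul]
    exact mul_le_mul_of_nonneg_left (abs_le_cosh_mul (by linarith) s) (abs_nonneg _)
  have hle := hS.abs_sub_le_of_eq_sub one_half_lt_one (fun s => Real.cosh_pos _)
    hV.continuous hW.continuous hV.eq hW.eq hlin ρ
  norm_num at hle
  linarith

variable (hV : IsShootingSolution N g a V)
include hV

theorem apply_zero : V 0 = 1 := by
  simp [hV.eq 0, radialLapInv_zero]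

section Derivatives

variable (hg : Continuous g)
include hg

theorem hasDerivAt (ρ : ℝ) :
    HasDerivAt V (a - 1 / 2 * rayAverage (N - 1) (radialLapInv N (g ∘ V)) ρ) ρ := by
  have hlin : HasDerivAt (fun ρ => 1 + a * ρ) a ρ := by
    simpa using ((hasDerivAt_id ρ).const_mul a).const_add 1
  have hT := continuous_radialLapInv (N := N) (hg.comp hV.continuous)
  exact (hlin.sub (hasDerivAt_radialLapInv hT ρ)).congr_of_eventuallyEq
    (Eventually.of_forall hV.eq)

theorem deriv_eq : deriv V =
    fun ρ => a - 1 / 2 * rayAverage (N - 1) (radialLapInv N (g ∘ V)) ρ :=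
  funext fun ρ => (hV.hasDerivAt hg ρ).deriv

theorem deriv_zero : deriv V 0 = a := by
  simp [hV.deriv_eq hg, rayAverage, radialLapInv_zero]

theorem strictAnti_deriv (hpos : ∀ v, 0 < g v) : StrictAnti (deriv V) := by
  have hgV := hg.comp hV.continuous
  have hT : ContDiff ℝ 1 (radialLapInv N (g ∘ V)) :=
    contDiff_radialLapInv (n := 0) (contDiff_zero.2 hgV)
  have hTpos (s : ℝ) : 0 < deriv (radialLapInv N (g ∘ V)) s := by
    rw [deriv_radialLapInv hgV]
    exact mul_pos one_half_pos (rayAverage_pos hgV (fun s => hpos _) s)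
  rw [hV.deriv_eq hg]
  refine strictAnti_of_hasDerivAt_neg
    (fun ρ => ((hasDerivAt_rayAverage hT ρ).const_mul (1 / 2)).const_sub a) fun ρ => ?_
  linarith [rayAverage_pos (k := N - 1 + 2) (hT.continuous_deriv le_rfl) hTpos ρ]

theorem strictMonoOn_of_deriv_eq_zero (hpos : ∀ v, 0 < g v) (hP : deriv V P = 0) :
    StrictMonoOn V (Icc 0 P) := by
  refine strictMonoOn_of_deriv_pos (convex_Icc 0 P) hV.continuous.continuousOn fun ρ hρ => ?_
  rw [interior_Icc] at hρ
  exact hP ▸ hV.strictAnti_deriv hg hpos hρ.2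

end Derivatives

theorem contDiff (hg : ContDiff ℝ 2 g) : ContDiff ℝ 4 V := by
  have hstep {n : ℕ} (hn : n ≤ 2) (h : ContDiff ℝ n V) : ContDiff ℝ (n + 1 + 1) V := by
    have hgV : ContDiff ℝ n (g ∘ V) := (hg.of_le (by exact_mod_cast hn)).comp h
    have hT : ContDiff ℝ (n + 1 + 1) (radialLapInv N (radialLapInv N (g ∘ V))) :=
      contDiff_radialLapInv (n := n + 1) (contDiff_radialLapInv hgV)
    rw [funext hV.eq]
    exact ContDiff.sub (by fun_prop) hT
  have h₂ : ContDiff ℝ ((2 : ℕ)) V := by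
    simpa [one_add_one_eq_two] using hstep (n := 0) zero_le_two (contDiff_zero.2 hV.continuous)
  have h₄ := hstep le_rfl h₂
  norm_num at h₄
  exact h₄

theorem biharm_one_sub_div (hN : 0 < N) (hg : ContDiff ℝ 2 g) (M : ℝ)
    (x : EuclideanSpace ℝ (Fin N)) :
    biharm (fun y => 1 - V (P * ‖y‖ ^ 2) / M) x = P ^ 2 / M * g (V (P * ‖x‖ ^ 2)) := by
  have hgV : ContDiff ℝ 1 (g ∘ V) :=
    (hg.of_le (by norm_num)).comp ((hV.contDiff hg).of_le (by norm_num))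
  have hT : ContDiff ℝ 1 (radialLapInv N (g ∘ V)) :=
    (contDiff_radialLapInv (n := 1) hgV).of_le (by norm_num)
  have hu : (fun y : EuclideanSpace ℝ (Fin N) => 1 - V (P * ‖y‖ ^ 2) / M) =
      fun y => (1 - 1 / M) + (-(a * P / M)) * ‖y‖ ^ 2 +
        1 / M * radialLapInv N (radialLapInv N (g ∘ V)) (P * ‖y‖ ^ 2) := by
    funext y
    rw [hV.eq]
    ring
  have hlap : lap (fun y : EuclideanSpace ℝ (Fin N) => 1 - V (P * ‖y‖ ^ 2) / M) =
      fun y => 2 * N * (-(a * P / M)) + 0 * ‖y‖ ^ 2 +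
        1 / M * P * radialLapInv N (g ∘ V) (P * ‖y‖ ^ 2) := by
    funext y
    rw [hu, lap_add_mul_radialLapInv hN hT]
    ring
  rw [biharm, hlap, lap_add_mul_radialLapInv hN hgV, Function.comp]
  ring

theorem abs_deriv_sub_le (hW : IsShootingSolution N g b W) (hL : LipschitzWith L g)
    (hg : ∀ v, |g v| ≤ C) (ρ : ℝ) :
    |deriv V ρ - deriv W ρ| ≤ (1 + L / (L + 2) * Real.cosh ((L + 2) * ρ)) * |a - b| := by
  have hgV := hL.continuous.comp hV.continuous
  have hgW := hL.continuous.comp hW.continuous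
  have hL₀ : (0 : ℝ) < L + 2 := by positivity
  have hA : |rayAverage (N - 1) (radialLapInv N (g ∘ V) - radialLapInv N (g ∘ W)) ρ| ≤
      L * (2 * |a - b|) / (L + 2) * Real.cosh ((L + 2) * ρ) := by
    refine abs_rayAverage_le (fun s => ?_) ρ
    rw [Pi.sub_apply, ← radialLapInv_sub hgV hgW]
    exact abs_radialLapInv_le hL₀ (abs_comp_sub_le_mul_cosh hL (hV.abs_sub_le hW hL hg)) s
  rw [rayAverage_sub (continuous_radialLapInv hgV) (continuous_radialLapInv hgW)] at hA
  rw [hV.deriv_eq hL.continuous, hW.deriv_eq hL.continuous, sub_sub_sub_comm, ← mul_sub]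
  refine (abs_sub _ _).trans ?_
  rw [abs_mul, abs_of_pos (one_half_pos (α := ℝ))]
  linear_combination 1 / 2 * hA

end IsShootingSolution

theorem exists_isShootingSolution_deriv_eq_zero (hL : LipschitzWith L g)
    (hg : ∀ v, g v ∈ Ioc 0 C) (hP : 0 < P) :
    ∃ a V, IsShootingSolution N g a V ∧ deriv V P = 0 := by
  have hpos (v : ℝ) : 0 < g v := (hg v).1
  have habs (v : ℝ) : |g v| ≤ C := (abs_of_pos (hpos v)).trans_le (hg v).2
  have hC : 0 < C := (hpos 0).trans_le (hg 0).2
  choose V hV using exists_isShootingSolution (N := N) hL habs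
  have hcont : Continuous fun a => deriv (V a) P := by
    have hLip (a b : ℝ) := (hV a).abs_deriv_sub_le (hV b) hL habs P
    refine (LipschitzWith.of_dist_le_mul
      (K := ⟨1 + L / (L + 2) * Real.cosh ((L + 2) * P), ?_⟩) hLip).continuous
    have := Real.cosh_pos ((L + 2) * P)
    positivity
  set B := C * Real.cosh P
  have hlow : deriv (V 0) P ≤ 0 := by
    exact ((hV 0).strictAnti_deriv hL.continuous hpos hP).le.trans
      ((hV 0).deriv_zero hL.continuous).le
  have hhigh : 0 ≤ deriv (V B) P := by
    have hA : |rayAverage (N - 1) (radialLapInv N (g ∘ V B)) P| ≤ B :=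
      (abs_rayAverage_le (abs_radialLapInv_le one_pos (abs_comp_le_mul_cosh habs)) P).trans_eq
        (by simp [B])
    rw [(hV B).deriv_eq hL.continuous]
    linarith [le_of_abs_le hA, (abs_nonneg _).trans hA]
  have hB₀ : 0 ≤ B := by positivity
  obtain ⟨a, -, ha⟩ := intermediate_value_Icc hB₀ hcont.continuousOn ⟨hlow, hhigh⟩
  exact ⟨a, V a, hV a, ha⟩

end Shooting

/-! ### The extremal solution -/

section ShootingSolution

variable {N : ℕ} {P : ℝ}

theorem IsShootingSolution.isClassicalSolution {a : ℝ} {V : ℝ → ℝ}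
    (hV : IsShootingSolution N truncatedInvSq a V) (hN : 0 < N) (hP : 0 < P)
    (hVP : deriv V P = 0) :
    1 < V P ∧ IsClassicalSolution N (P ^ 2 / V P ^ 3) fun x => 1 - V (P * ‖x‖ ^ 2) / V P := by
  have hg : ContDiff ℝ 2 truncatedInvSq := contDiff_truncatedInvSq (n := 2)
  have hmono : StrictMonoOn V (Icc 0 P) := hV.strictMonoOn_of_deriv_eq_zero hg.continuous
    (fun v => (truncatedInvSq_mem_Ioc v).1) hVP
  have h₀ : 0 ∈ Icc 0 P := left_mem_Icc.2 hP.le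
  have hP' : P ∈ Icc 0 P := right_mem_Icc.2 hP.le
  have hmem {x : EuclideanSpace ℝ (Fin N)} (hx : x ∈ ball 0 1) : P * ‖x‖ ^ 2 ∈ Ico 0 P := by
    rw [mem_ball_zero_iff] at hx
    exact ⟨by positivity, mul_lt_of_lt_one_right hP (pow_lt_one₀ (norm_nonneg x) hx two_ne_zero)⟩
  have hVge {x : EuclideanSpace ℝ (Fin N)} (hx : x ∈ ball 0 1) : 1 ≤ V (P * ‖x‖ ^ 2) :=
    hV.apply_zero ▸ hmono.monotoneOn h₀ (Ico_subset_Icc_self (hmem hx)) (hmem hx).1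
  have hVP₁ : 1 < V P := hV.apply_zero ▸ hmono h₀ hP' hP
  have hVP₀ : 0 < V P := one_pos.trans hVP₁
  refine ⟨hVP₁, ContDiff.contDiffOn ?_, fun x hx => ?_, fun x hx => ?_, fun x hx => ?_,
    fun x hx => ?_, fun x hx => ?_⟩
  · exact contDiff_const.sub
      (((hV.contDiff hg).comp (contDiff_const.mul (contDiff_norm_sq ℝ))).div_const _)
  · exact sub_pos.2 ((div_lt_one hVP₀).2 (hmono (Ico_subset_Icc_self (hmem hx)) hP' (hmem hx).2))
  · exact sub_lt_self 1 (div_pos (one_pos.trans_le (hVge hx)) hVP₀)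
  · have hVx : 0 < V (P * ‖x‖ ^ 2) := one_pos.trans_le (hVge hx)
    rw [hV.biharm_one_sub_div hN hg, truncatedInvSq_of_one_le (hVge hx), sub_sub_cancel]
    field_simp
  · simp [hx, hVP₀.ne']
  · have hρ : HasDerivAt (fun ρ => 1 - V (P * ρ) / V P) 0 (‖x‖ ^ 2) := by
      have hV' := (hV.hasDerivAt hg.continuous (P * ‖x‖ ^ 2)).differentiableAt.hasDerivAt
      refine (((hV'.comp _ ((hasDerivAt_id _).const_mul P)).div_const _).const_sub 1).congr_deriv ?_
      simp [hx, hVP]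
    have hu := hρ.comp_hasFDerivAt x (hasStrictFDerivAt_norm_sq x).hasFDerivAt
    rw [zero_smul] at hu
    exact DFunLike.congr_fun (hu.hasFDerivWithinAt.fderivWithin
      (uniqueDiffOn_closedBall_zero_one x (by simp [hx]))) x

theorem exists_isRadialSolution_sq_div_pow_three (hN : 0 < N) (hP : 0 < P) :
    ∃ M W W', 1 < M ∧ P ^ 2 / M ^ 3 ∈ solSet N ∧
      IsRadialSolution N (P ^ 2 / M ^ 3) W W' (1 - 1 / M) := by
  obtain ⟨L, hL⟩ := exists_lipschitzWith_truncatedInvSq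
  obtain ⟨a, V, hV, hVP⟩ := exists_isShootingSolution_deriv_eq_zero (N := N) hL
    truncatedInvSq_mem_Ioc hP
  obtain ⟨hM, hu⟩ := hV.isClassicalSolution hN hP hVP
  have hlam : 0 < P ^ 2 / V P ^ 3 := by positivity
  obtain ⟨W, W', hW, -⟩ := hu.exists_isRadialSolution hN hlam fun x _ y hxy => by simp [hxy]
  exact ⟨V P, W, W', hM, ⟨hlam, _, hu⟩, by simpa [hV.apply_zero] using hW⟩

theorem exists_isRadialSolution_sub_lt_center (hN : 9 ≤ N) {ε : ℝ} (hε : 0 < ε) :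
    ∃ lam ∈ solSet N, ∃ W W' u₀, IsRadialSolution N lam W W' u₀ ∧ 1 - ε < u₀ := by
  have hbarrier : 0 < barrierVoltage N := barrierVoltage_pos (by lia)
  obtain ⟨M, W, W', hM, hmem, hW⟩ := exists_isRadialSolution_sq_div_pow_three (N := N) (by lia)
    (Real.sqrt_pos.2 (by positivity : 0 < barrierVoltage N * (1 / ε) ^ 3))
  refine ⟨_, hmem, W, W', _, hW, ?_⟩
  have hlt := hW.lt_barrierVoltage hN
  rw [Real.sq_sqrt (by positivity), div_lt_iff₀ (by positivity)] at hlt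
  have hεM : 1 / ε < M := lt_of_pow_lt_pow_left₀ 3 (by linarith)
    (lt_of_mul_lt_mul_left hlt hbarrier.le)
  linarith [(one_div_lt hε (by linarith)).1 hεM]

end ShootingSolution

section Extremal

variable {N : ℕ}

/-- The pull-in voltage `λ*`. -/
noncomputable def pullInVoltage (N : ℕ) : ℝ :=
  sSup (solSet N)

theorem le_pullInVoltage {lam : ℝ} (h : lam ∈ solSet N) : lam ≤ pullInVoltage N :=
  le_csSup (bddAbove_solSet N) h

theorem pullInVoltage_pos (hN : 9 ≤ N) : 0 < pullInVoltage N := by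
  obtain ⟨lam, hmem, -⟩ := exists_isRadialSolution_sub_lt_center hN one_pos
  exact hmem.1.trans_le (le_pullInVoltage hmem)

theorem exists_isRadialSolution_lt_pullInVoltage (hN : 9 ≤ N) {ε : ℝ} (hε : 0 < ε) :
    ∃ lam < pullInVoltage N, ∃ W W' u₀, IsRadialSolution N lam W W' u₀ ∧ 1 - ε < u₀ := by
  obtain ⟨lam, hmem, W, W', u₀, hW, hu₀⟩ := exists_isRadialSolution_sub_lt_center hN hε
  rcases (le_pullInVoltage hmem).lt_or_eq with hlt | rfl
  · exact ⟨lam, hlt, W, W', u₀, hW, hu₀⟩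
  -- If the voltage is exactly `λ*`, take a second solution with a larger value at the origin: its
  -- voltage is different, because a solution is determined by its voltage.
  obtain ⟨lam', hmem', Z, Z', v₀, hZ, hv₀⟩ :=
    exists_isRadialSolution_sub_lt_center hN (sub_pos.2 hW.center_lt_one)
  rw [sub_sub_cancel] at hv₀
  rcases (le_pullInVoltage hmem').lt_or_eq with hlt | rfl
  · exact ⟨lam', hlt, Z, Z', v₀, hZ, hu₀.trans hv₀⟩
  · exact absurd (hZ.center_le_of_same_voltage hW hN) hv₀.not_ge

theorem powerProfile_norm_sq {E : Type*} [SeminormedAddGroup E] (C : ℝ) (x : E) :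
    powerProfile C (‖x‖ ^ 2) = 1 - C * ‖x‖ ^ ((4 : ℝ) / 3) := by
  rw [powerProfile, ← Real.rpow_natCast_mul (norm_nonneg x)]
  norm_num

/-- `u` is the branch of minimal solutions of `(P)_λ` for `0 < λ < λ*`, and `uStar` is its limit
as `λ ↗ λ*`, the extremal solution. -/
structure IsExtremalLimit (N : ℕ) (u : ℝ → EuclideanSpace ℝ (Fin N) → ℝ)
    (uStar : EuclideanSpace ℝ (Fin N) → ℝ) : Prop where
  minimal : ∀ lam, 0 < lam → lam < pullInVoltage N → IsClassicalSolution N lam (u lam) ∧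
    ∀ v, IsClassicalSolution N lam v →
      ∀ x ∈ ball (0 : EuclideanSpace ℝ (Fin N)) 1, u lam x ≤ v x
  mono : ∀ x ∈ ball (0 : EuclideanSpace ℝ (Fin N)) 1, ∀ l₁ l₂,
    0 < l₁ → l₁ ≤ l₂ → l₂ < pullInVoltage N → u l₁ x ≤ u l₂ x
  tendsto : ∀ x ∈ ball (0 : EuclideanSpace ℝ (Fin N)) 1,
    Tendsto (fun lam => u lam x) (𝓝[<] pullInVoltage N) (𝓝 (uStar x))

namespace IsExtremalLimit

variable {u : ℝ → EuclideanSpace ℝ (Fin N) → ℝ} {uStar : EuclideanSpace ℝ (Fin N) → ℝ}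
  {lam C : ℝ} {x : EuclideanSpace ℝ (Fin N)} (h : IsExtremalLimit N u uStar)
include h

theorem exists_isRadialSolution (hN : 0 < N) (hlam : lam ∈ Ioo 0 (pullInVoltage N)) :
    ∃ W W', IsRadialSolution N lam W W' (u lam 0) ∧
      ∀ x ∈ ball (0 : EuclideanSpace ℝ (Fin N)) 1, u lam x = W (‖x‖ ^ 2) := by
  obtain ⟨hu, hmin⟩ := h.minimal lam hlam.1 hlam.2
  exact hu.exists_isRadialSolution hN hlam.1 fun x hx y hxy =>
    hu.eq_of_norm_eq_of_minimal hmin hx hxy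

theorem le_extremal (hx : x ∈ ball 0 1) (hlam : lam ∈ Ioo 0 (pullInVoltage N)) :
    u lam x ≤ uStar x := by
  refine ge_of_tendsto (h.tendsto x hx) ?_
  filter_upwards [Ioo_mem_nhdsLT hlam.2] with l hl
  exact h.mono x hx lam l hlam.1 hl.1.le hl.2

theorem extremal_le {b : ℝ} (hN : 9 ≤ N) (hx : x ∈ ball 0 1)
    (hb : ∀ lam ∈ Ioo 0 (pullInVoltage N), u lam x ≤ b) : uStar x ≤ b :=
  le_of_tendsto (h.tendsto x hx) (mem_of_superset (Ioo_mem_nhdsLT (pullInVoltage_pos hN)) hb)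

theorem extremal_le_one (hN : 9 ≤ N) (hx : x ∈ ball 0 1) : uStar x ≤ 1 :=
  h.extremal_le hN hx fun lam hlam => ((h.minimal lam hlam.1 hlam.2).1.lt_one x hx).le

theorem exists_sub_lt_center (hN : 9 ≤ N) {ε : ℝ} (hε : 0 < ε) :
    ∃ lam ∈ Ioo 0 (pullInVoltage N), 1 - ε < u lam 0 := by
  obtain ⟨lam, hlam, W, W', u₀, hW, hu₀⟩ := exists_isRadialSolution_lt_pullInVoltage hN hε
  have hlam' : lam ∈ Ioo 0 (pullInVoltage N) := ⟨hW.voltage_pos, hlam⟩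
  obtain ⟨Z, Z', hZ, -⟩ := h.exists_isRadialSolution (by lia) hlam'
  exact ⟨lam, hlam', hu₀.trans_le (hW.center_le_of_same_voltage hZ hN)⟩

theorem extremal_zero (hN : 9 ≤ N) : uStar 0 = 1 := by
  have h₀ : (0 : EuclideanSpace ℝ (Fin N)) ∈ ball 0 1 := mem_ball_self one_pos
  refine (h.extremal_le_one hN h₀).antisymm (le_of_forall_pos_sub_le fun ε hε => ?_)
  obtain ⟨lam, hlam, hlt⟩ := h.exists_sub_lt_center hN hε
  exact hlt.le.trans (h.le_extremal h₀ hlam)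

theorem isGreatest_image_ball (hN : 9 ≤ N) : IsGreatest (uStar '' ball 0 1) 1 :=
  ⟨⟨0, mem_ball_self one_pos, h.extremal_zero hN⟩,
    forall_mem_image.2 fun _ hx => h.extremal_le_one hN hx⟩

theorem pow_three_mul_lamBar_le_pullInVoltage (hN : 9 ≤ N) (hC : 0 < C) {r : ℝ}
    (hr : r ∈ Ioc 0 1) (hle : ∀ lam ∈ Ioo 0 (pullInVoltage N), ∀ W W' u₀,
      IsRadialSolution N lam W W' u₀ → (∀ x ∈ ball 0 1, u lam x = W (‖x‖ ^ 2)) →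
        ∀ ρ ∈ Ioc 0 r, W ρ ≤ powerProfile C ρ) :
    C ^ 3 * lamBar N ≤ pullInVoltage N := by
  refine pow_three_mul_lamBar_le (by lia) hC hr fun ε hε => ?_
  obtain ⟨lam, hlam, hlt⟩ := h.exists_sub_lt_center hN hε
  obtain ⟨W, W', hW, huW⟩ := h.exists_isRadialSolution (by lia) hlam
  exact ⟨lam, hlam.2.le, W, W', _, hW, hlt, hle lam hlam W W' _ hW huW⟩

theorem lamBar_le_pullInVoltage (hN : 9 ≤ N) : lamBar N ≤ pullInVoltage N := by
  simpa using h.pow_three_mul_lamBar_le_pullInVoltage hN one_pos (right_mem_Ioc.2 one_pos)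
    fun _ _ _ _ _ hW _ => hW.le_powerProfile_one hN

theorem extremal_le_powerProfile_one (hN : 9 ≤ N) (hx : x ∈ ball 0 1) (hx₀ : x ≠ 0) :
    uStar x ≤ powerProfile 1 (‖x‖ ^ 2) := by
  refine h.extremal_le hN hx fun lam hlam => ?_
  obtain ⟨W, W', hW, huW⟩ := h.exists_isRadialSolution (by lia) hlam
  rw [huW x hx]
  exact hW.le_powerProfile_one hN _ (norm_sq_mem_Ioc hx hx₀)

theorem powerProfile_le_extremal (hN : 9 ≤ N) (hx : x ∈ ball 0 1) (hx₀ : x ≠ 0) (hC : 1 < C)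
    (hvoltage : pullInVoltage N < C ^ 3 * lamBar N) :
    powerProfile C (‖x‖ ^ 2) ≤ uStar x := by
  by_contra! hlt
  refine hvoltage.not_ge (h.pow_three_mul_lamBar_le_pullInVoltage hN (one_pos.trans hC)
    (norm_sq_mem_Ioc hx hx₀) fun lam hlam W W' u₀ hW huW => ?_)
  refine hW.le_powerProfile_of_le hN hC (hlam.2.trans hvoltage).le (norm_sq_mem_Ioc hx hx₀) ?_
  exact huW x hx ▸ (h.le_extremal hx hlam).trans hlt.le

theorem powerProfile_rpow_le_extremal (hN : 9 ≤ N) (hx : x ∈ ball 0 1) (hx₀ : x ≠ 0) :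
    powerProfile ((pullInVoltage N / lamBar N) ^ ((1 : ℝ) / 3)) (‖x‖ ^ 2) ≤ uStar x := by
  have hlamBar : 0 < lamBar N := lamBar_pos (by lia)
  set C₀ := (pullInVoltage N / lamBar N) ^ ((1 : ℝ) / 3) with hC₀
  have hratio : 1 ≤ pullInVoltage N / lamBar N :=
    (one_le_div hlamBar).2 (h.lamBar_le_pullInVoltage hN)
  have hC₀_one : 1 ≤ C₀ := Real.one_le_rpow hratio (by norm_num)
  have hC₀_pow : C₀ ^ 3 * lamBar N = pullInVoltage N := by
    rw [hC₀, ← Real.rpow_mul_natCast (zero_le_one.trans hratio)]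
    norm_num [hlamBar.ne']
  have hcont : Continuous fun C => powerProfile C (‖x‖ ^ 2) := by
    unfold powerProfile
    fun_prop
  refine le_of_tendsto (hcont.continuousWithinAt (s := Ioi C₀)) ?_
  filter_upwards [self_mem_nhdsWithin] with C hC
  refine h.powerProfile_le_extremal hN hx hx₀ (hC₀_one.trans_lt hC) ?_
  rw [← hC₀_pow]
  exact mul_lt_mul_of_pos_right (pow_lt_pow_left₀ hC (by linarith) three_ne_zero) hlamBar

theorem sub_mul_norm_rpow_le_extremal (hN : 9 ≤ N) (hx : x ∈ ball 0 1) :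
    1 - (pullInVoltage N / lamBar N) ^ ((1 : ℝ) / 3) * ‖x‖ ^ ((4 : ℝ) / 3) ≤ uStar x := by
  rcases eq_or_ne x 0 with rfl | hx₀
  · simp [h.extremal_zero hN]
  · exact powerProfile_norm_sq _ x ▸ h.powerProfile_rpow_le_extremal hN hx hx₀

theorem extremal_le_sub_norm_rpow (hN : 9 ≤ N) (hx : x ∈ ball 0 1) :
    uStar x ≤ 1 - ‖x‖ ^ ((4 : ℝ) / 3) := by
  rcases eq_or_ne x 0 with rfl | hx₀
  · simp [h.extremal_zero hN]
  · simpa [powerProfile_norm_sq] using h.extremal_le_powerProfile_one hN hx hx₀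

end IsExtremalLimit

end Extremal

end

/-- for N ≥ 9 the extremal solution u* is singular and satisfies
1 - C₀|x|^{4/3} ≤ u*(x) ≤ 1 - |x|^{4/3} on B, where C₀ = (λ*/λ̄_N)^{1/3}. -/
theorem extremal_singular_and_bounds_dim_ge_nine (N : ℕ) (hN : 9 ≤ N)
    (uMin : ℝ → EuclideanSpace ℝ (Fin N) → ℝ)
    (hMin : ∀ lam : ℝ, 0 < lam → lam < sSup (solSet N) →
      IsClassicalSolution N lam (uMin lam) ∧
        ∀ v, IsClassicalSolution N lam v →
          ∀ x ∈ ball (0 : EuclideanSpace ℝ (Fin N)) 1, uMin lam x ≤ v x)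
    (hMono : ∀ x ∈ ball (0 : EuclideanSpace ℝ (Fin N)) 1, ∀ l₁ l₂ : ℝ,
      0 < l₁ → l₁ ≤ l₂ → l₂ < sSup (solSet N) → uMin l₁ x ≤ uMin l₂ x)
    (uStar : EuclideanSpace ℝ (Fin N) → ℝ)
    (hStar : ∀ x ∈ ball (0 : EuclideanSpace ℝ (Fin N)) 1,
      Tendsto (fun lam => uMin lam x) (nhdsWithin (sSup (solSet N)) (Iio (sSup (solSet N))))
        (nhds (uStar x)))
    :
    sSup (uStar '' ball (0 : EuclideanSpace ℝ (Fin N)) 1) = 1 ∧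
      ∀ x ∈ ball (0 : EuclideanSpace ℝ (Fin N)) 1,
        1 - (sSup (solSet N) / lamBar N) ^ ((1 : ℝ) / 3) * ‖x‖ ^ ((4 : ℝ) / 3) ≤ uStar x ∧
          uStar x ≤ 1 - ‖x‖ ^ ((4 : ℝ) / 3) := by
  have h : IsExtremalLimit N uMin uStar := ⟨hMin, hMono, hStar⟩
  exact ⟨(h.isGreatest_image_ball hN).csSup_eq, fun x hx =>
    ⟨h.sub_mul_norm_rpow_le_extremal hN hx, h.extremal_le_sub_norm_rpow hN hx⟩⟩
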